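/- Suppose 0 < r ≤ ∞ and 1 ≤ p, q ≤ ∞ satisfy 1/r = 1/q + 1/p. Let a ∈ L^p S^m_ρ with 0 ≤ ρ ≤ 1 and m < n(ρ−1)/min(2, p, q). Then the pseudodifferential operator T_a f(x) = (2π)^{−n} ∫_{ℝⁿ} a(x,ξ) e^{i⟨x,ξ⟩} f̂(ξ) dξ is bounded from L^q(ℝⁿ) to L^r(ℝⁿ): ‖T_a f‖_{L^r} ≤ C ‖f‖_{L^q} for all Schwartz f. -/

import Mathlib

open MeasureTheory Real Complex
open scoped ENNReal NNReal RealInnerProductSpace SchwartzMap Classical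

noncomputable section

/-- `ℝⁿ` as a Euclidean space. -/
abbrev En (n : ℕ) : Type := EuclideanSpace ℝ (Fin n)

/-- Partial derivative in the `i`-th coordinate direction. -/
def pd {n : ℕ} {F : Type} [NormedAddCommGroup F] [NormedSpace ℝ F]
    (i : Fin n) (f : En n → F) : En n → F :=
  fun x => fderiv ℝ f x (EuclideanSpace.single i 1)

/-- Multi-index partial derivative `∂^α`. -/
def mderiv {n : ℕ} {F : Type} [NormedAddCommGroup F] [NormedSpace ℝ F]
    (α : Fin n → ℕ) (f : En n → F) : En n → F :=
  (List.finRange n).foldr (fun i g => (pd i)^[α i] g) f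

/-- The order `|α|` of a multi-index. -/
def mdeg {n : ℕ} (α : Fin n → ℕ) : ℕ := ∑ i, α i

/-- The finite set of multi-indices `α` with every entry `≤ k` and `|α| ≤ k`;
this enumerates all multi-indices of order at most `k`. -/
def multiIdx (n k : ℕ) : Finset (Fin n → ℕ) :=
  (Fintype.piFinset fun _ : Fin n => Finset.range (k + 1)).filter fun α => mdeg α ≤ k

/-- Japanese bracket `⟨ξ⟩^t = (1+|ξ|²)^{t/2}`. -/
def jb {n : ℕ} (ξ : En n) (t : ℝ) : ℝ := (1 + ‖ξ‖ ^ 2) ^ (t / 2)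

/-- The rough amplitude class `L^p S^m_ρ`. -/
def LpSm {n : ℕ} (p : ℝ≥0∞) (m ρ : ℝ) (a : En n → En n → ℂ) : Prop :=
  (∀ x, ContDiff ℝ (⊤ : ℕ∞) (a x)) ∧
  (∀ (α : Fin n → ℕ) (ξ : En n), AEStronglyMeasurable (fun x => mderiv α (a x) ξ) volume) ∧
  ∀ α : Fin n → ℕ, ∃ C : ℝ, ∀ ξ : En n,
    eLpNorm (fun x => mderiv α (a x) ξ) p volume ≤
      ENNReal.ofReal (C * jb ξ (m - ρ * (mdeg α : ℝ)))

/-- The seminorms `|a|_{p,m,s}` of an amplitude in `L^p S^m_ρ`. -/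
def aSemi {n : ℕ} (p : ℝ≥0∞) (m ρ : ℝ) (s : ℕ) (a : En n → En n → ℂ) : ℝ≥0∞ :=
  ∑ α ∈ multiIdx n s, ⨆ ξ : En n,
    ENNReal.ofReal (jb ξ (ρ * (mdeg α : ℝ) - m)) *
      eLpNorm (fun x => mderiv α (a x) ξ) p volume

/-- The mixed derivative `∂_ξ^α ∂_x^β φ(x,ξ)`. -/
def mixedD {n : ℕ} (α β : Fin n → ℕ) (φ : En n → En n → ℝ) (x ξ : En n) : ℝ :=
  mderiv α (fun ζ => mderiv β (fun y => φ y ζ) x) ξ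

/-- The phase function class `Φ^k`. -/
def PhiClass {n : ℕ} (k : ℕ) (φ : En n → En n → ℝ) : Prop :=
  ContDiffOn ℝ (⊤ : ℕ∞) (fun q : En n × En n => φ q.1 q.2) {q | q.2 ≠ 0} ∧
  (∀ (x ξ : En n) (t : ℝ), 0 < t → φ x (t • ξ) = t * φ x ξ) ∧
  ∀ α β : Fin n → ℕ, k ≤ mdeg α + mdeg β →
    ∃ C : ℝ, ∀ (x ξ : En n), ξ ≠ 0 →
      ‖ξ‖ ^ ((mdeg α : ℝ) - 1) * |mixedD α β φ x ξ| ≤ C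

/-- The mixed Hessian matrix `[∂²φ/∂x_j∂ξ_k]`. -/
def mixHess {n : ℕ} (φ : En n → En n → ℝ) (x ξ : En n) : Matrix (Fin n) (Fin n) ℝ :=
  Matrix.of fun j k => pd j (fun y => pd k (φ y) ξ) x

/-- The strong non-degeneracy (SND) condition. -/
def SNDcond {n : ℕ} (φ : En n → En n → ℝ) : Prop :=
  ∃ c : ℝ, 0 < c ∧ ∀ (x ξ : En n), ξ ≠ 0 → c ≤ |(mixHess φ x ξ).det|

/-- The Fourier transform `f̂(ξ) = ∫ e^{-i⟨y,ξ⟩} f(y) dy`. -/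
def ft {n : ℕ} (f : En n → ℂ) (ξ : En n) : ℂ :=
  ∫ y : En n, Complex.exp (-(Complex.I * Complex.ofReal ⟪y, ξ⟫)) * f y

/-- The linear Fourier integral operator
`T_a f(x) = (2π)^{-n} ∫ e^{iφ(x,ξ)} a(x,ξ) f̂(ξ) dξ`. -/
def fio {n : ℕ} (a : En n → En n → ℂ) (φ : En n → En n → ℝ) (f : En n → ℂ)
    (x : En n) : ℂ :=
  (((2 * Real.pi) ^ n)⁻¹ : ℝ) •
    ∫ ξ : En n, Complex.exp (Complex.I * Complex.ofReal (φ x ξ)) * a x ξ * ft f ξ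

/-- The conjugate exponent `p′` of `p ∈ [1,∞]`. -/
def pconj (p : ℝ≥0∞) : ℝ≥0∞ := (1 - p⁻¹)⁻¹

/-- The order `𝔪(ρ,p,q)` from Definition 4.6. -/
def frakm (n : ℕ) (ρ : ℝ) (p q : ℝ≥0∞) : ℝ :=
  if p < 2 ∨ (2 ≤ p ∧ q < pconj p) then
    (n : ℝ) * (ρ - 1) * (min p q)⁻¹.toReal -
      (((n : ℝ) - 1) / 2) * (p⁻¹.toReal + (min p q)⁻¹.toReal)
  else if 2 ≤ q then
    (n : ℝ) * (ρ - 1) / 2 - ((n : ℝ) - 1) * (1 / 2 - q⁻¹.toReal)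
  else
    (n : ℝ) * (ρ - 1) * q⁻¹.toReal -
      (((n : ℝ) - 1) / (1 - 2 * p⁻¹.toReal)) * (q⁻¹.toReal - 1 / 2)

/-- The order `ℳ(ρ,p,q)` from Definition 4.6. -/
def scrM (n : ℕ) (ρ : ℝ) (p q : ℝ≥0∞) : ℝ :=
  (n : ℝ) * (ρ - 1) * q⁻¹.toReal -
    (((n : ℝ) - 1) / (1 + p⁻¹.toReal)) * (q⁻¹.toReal - 1 / 2)

/-- The distribution function `λ_f(s) = |{x : |f(x)| > s}|`. -/
def distFn {n : ℕ} (f : En n → ℂ) (s : ℝ) : ℝ≥0∞ := volume {x : En n | s < ‖f x‖}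

/-- The decreasing rearrangement `f*`. -/
def rearr {n : ℕ} (f : En n → ℂ) (t : ℝ) : ℝ :=
  sInf {s : ℝ | 0 ≤ s ∧ distFn f s ≤ ENNReal.ofReal t}

/-- The Lorentz space quasinorm
`‖f‖_{L^{r,q}} = (∫_0^∞ (t^{1/r} f*(t))^q dt/t)^{1/q}`. -/
def lorentzNorm {n : ℕ} (r q : ℝ≥0∞) (f : En n → ℂ) : ℝ≥0∞ :=
  (∫⁻ t in Set.Ioi (0 : ℝ),
      ENNReal.ofReal ((t ^ r⁻¹.toReal * rearr f t) ^ q.toReal / t)) ^ q⁻¹.toReal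

/-- Mixed frequency derivatives `∂_ξ^{α₁} ∂_η^{α₂} a(x,ξ,η)` of a bilinear amplitude. -/
def d2 {n : ℕ} (α₁ α₂ : Fin n → ℕ) (a : En n → En n → En n → ℂ)
    (x ξ η : En n) : ℂ :=
  mderiv α₁ (fun ζ => mderiv α₂ (fun θ => a x ζ θ) η) ξ

/-- Mixed derivatives `∂_x^β ∂_ξ^{α₁} ∂_η^{α₂} a(x,ξ,η)` of a bilinear amplitude. -/
def d3 {n : ℕ} (β α₁ α₂ : Fin n → ℕ) (a : En n → En n → En n → ℂ)
    (x ξ η : En n) : ℂ :=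
  mderiv β (fun y => d2 α₁ α₂ a y ξ η) x

/-- The bilinear product-type rough amplitude class `L^p_Π S^{(m₁,m₂)}_{(ρ₁,ρ₂)}(n,2)`. -/
def LpPiSm2 {n : ℕ} (p : ℝ≥0∞) (m₁ m₂ ρ₁ ρ₂ : ℝ) (a : En n → En n → En n → ℂ) : Prop :=
  (∀ x, ContDiff ℝ (⊤ : ℕ∞) (fun q : En n × En n => a x q.1 q.2)) ∧
  (∀ (α₁ α₂ : Fin n → ℕ) (ξ η : En n),
    AEStronglyMeasurable (fun x => d2 α₁ α₂ a x ξ η) volume) ∧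
  ∀ α₁ α₂ : Fin n → ℕ, ∃ C : ℝ, ∀ ξ η : En n,
    eLpNorm (fun x => d2 α₁ α₂ a x ξ η) p volume ≤
      ENNReal.ofReal (C * jb ξ (m₁ - ρ₁ * (mdeg α₁ : ℝ)) * jb η (m₂ - ρ₂ * (mdeg α₂ : ℝ)))

/-- The bilinear rough amplitude class `L^p S^m_ρ(n,2)`. -/
def LpSm2 {n : ℕ} (p : ℝ≥0∞) (m ρ : ℝ) (a : En n → En n → En n → ℂ) : Prop :=
  (∀ x, ContDiff ℝ (⊤ : ℕ∞) (fun q : En n × En n => a x q.1 q.2)) ∧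
  (∀ (α₁ α₂ : Fin n → ℕ) (ξ η : En n),
    AEStronglyMeasurable (fun x => d2 α₁ α₂ a x ξ η) volume) ∧
  ∀ α₁ α₂ : Fin n → ℕ, ∃ C : ℝ, ∀ ξ η : En n,
    eLpNorm (fun x => d2 α₁ α₂ a x ξ η) p volume ≤
      ENNReal.ofReal (C * (1 + ‖ξ‖ + ‖η‖) ^ (m - ρ * ((mdeg α₁ : ℝ) + (mdeg α₂ : ℝ))))

/-- The bilinear Hörmander class `S^m_{ρ,δ}(n,2)`. -/
def HormS2 {n : ℕ} (m ρ δ : ℝ) (a : En n → En n → En n → ℂ) : Prop :=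
  ContDiff ℝ (⊤ : ℕ∞) (fun q : En n × En n × En n => a q.1 q.2.1 q.2.2) ∧
  ∀ β α₁ α₂ : Fin n → ℕ, ∃ C : ℝ, ∀ x ξ η : En n,
    ‖d3 β α₁ α₂ a x ξ η‖ ≤
      C * (1 + ‖ξ‖ + ‖η‖) ^ (m - ρ * ((mdeg α₁ : ℝ) + (mdeg α₂ : ℝ)) + δ * (mdeg β : ℝ))

/-- The bilinear Fourier integral operator
`T_a(f,g)(x) = ∫∫ a(x,ξ,η) e^{iφ₁(x,ξ)+iφ₂(x,η)} f̂(ξ) ĝ(η) dξ dη`. -/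
def bfio {n : ℕ} (a : En n → En n → En n → ℂ) (φ₁ φ₂ : En n → En n → ℝ)
    (f g : En n → ℂ) (x : En n) : ℂ :=
  ∫ w : En n × En n,
    a x w.1 w.2 * Complex.exp (Complex.I * Complex.ofReal (φ₁ x w.1 + φ₂ x w.2)) *
      ft f w.1 * ft g w.2

/-- Partial derivative of a function of `N` frequency variables in the `i`-th coordinate
of the `j`-th variable. -/
def pdN {n N : ℕ} (j : Fin N) (i : Fin n) (g : (Fin N → En n) → ℂ) :
    (Fin N → En n) → ℂ :=
  fun ξ => fderiv ℝ g ξ (Pi.single j (EuclideanSpace.single i 1))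

/-- Multi-index derivative `∂_{ξ₁}^{A 1} ⋯ ∂_{ξ_N}^{A N}`. -/
def mderivN {n N : ℕ} (A : Fin N → Fin n → ℕ) (g : (Fin N → En n) → ℂ) :
    (Fin N → En n) → ℂ :=
  (List.finRange N).foldr
    (fun j h => (List.finRange n).foldr (fun i h' => (pdN j i)^[A j i] h') h) g

/-- The multilinear product-type rough amplitude class `L^p_Π S^{m⃗}_{ρ⃗}(n,N)`. -/
def LpPiSmN {n N : ℕ} (p : ℝ≥0∞) (m ρ : Fin N → ℝ)
    (a : En n → (Fin N → En n) → ℂ) : Prop :=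
  (∀ x, ContDiff ℝ (⊤ : ℕ∞) (a x)) ∧
  (∀ (A : Fin N → Fin n → ℕ) (ξ : Fin N → En n),
    AEStronglyMeasurable (fun x => mderivN A (a x) ξ) volume) ∧
  ∀ A : Fin N → Fin n → ℕ, ∃ C : ℝ, ∀ ξ : Fin N → En n,
    eLpNorm (fun x => mderivN A (a x) ξ) p volume ≤
      ENNReal.ofReal (C * ∏ j, jb (ξ j) (m j - ρ j * (mdeg (A j) : ℝ)))

/-- The multilinear rough amplitude class `L^p S^m_ρ(n,N)`. -/
def LpSmN {n N : ℕ} (p : ℝ≥0∞) (m ρ : ℝ) (a : En n → (Fin N → En n) → ℂ) : Prop :=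
  (∀ x, ContDiff ℝ (⊤ : ℕ∞) (a x)) ∧
  (∀ (A : Fin N → Fin n → ℕ) (ξ : Fin N → En n),
    AEStronglyMeasurable (fun x => mderivN A (a x) ξ) volume) ∧
  ∀ A : Fin N → Fin n → ℕ, ∃ C : ℝ, ∀ ξ : Fin N → En n,
    eLpNorm (fun x => mderivN A (a x) ξ) p volume ≤
      ENNReal.ofReal (C * (1 + ∑ j, ‖ξ j‖) ^ (m - ρ * ∑ j, (mdeg (A j) : ℝ)))

/-- The multilinear Fourier integral operator. -/
def mfio {n N : ℕ} (a : En n → (Fin N → En n) → ℂ) (φ : Fin N → En n → En n → ℝ)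
    (f : Fin N → En n → ℂ) (x : En n) : ℂ :=
  ∫ ξ : Fin N → En n,
    a x ξ * Complex.exp (Complex.I * Complex.ofReal (∑ j, φ j x (ξ j))) *
      ∏ j, ft (f j) (ξ j)

/-- The Sobolev (Bessel potential) norm `‖f‖_{H^{s,q}} = ‖ℱ^{-1}(⟨ξ⟩^s f̂)‖_{L^q}`. -/
def besselNorm {n : ℕ} (s : ℝ) (q : ℝ≥0∞) (f : En n → ℂ) : ℝ≥0∞ :=
  eLpNorm (fun x : En n =>
    (((2 * Real.pi) ^ n)⁻¹ : ℝ) •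
      ∫ ξ : En n, Complex.ofReal (jb ξ s) * ft f ξ *
        Complex.exp (Complex.I * Complex.ofReal ⟪x, ξ⟫)) q volume

/-!
The symbol is cut into Littlewood–Paley pieces `ψⱼ a`, living on `|ξ| ∼ 2^j`. Let `s = min 2 p q`.
A piece acts on `f` by convolution with its inverse Fourier transform in `ξ`, and splitting off the
weight `1 + ∑ᵢ |2^(jρ) zᵢ| ^ (n + 1)`, Hölder and Hausdorff–Young bound it pointwise by
`Aⱼ(x) Bⱼ(x)`. Here `Aⱼ` is an `L^s` Sobolev norm of `a(x, ·)` over the dyadic shell in which every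
derivative costs `2^(jρ)`, and `Bⱼ` is the `L^s` norm of the translate of `f` against the inverse
weight. As `s ≤ p`, Minkowski's inequality gives `‖Aⱼ‖_p ≲ 2^(j(n/s + m))`; as `s ≤ q`, it gives
`‖Bⱼ‖_q ≲ 2^(-jρn/s) ‖f‖_q`. The hypothesis on `m` says that the product of the two bounds decays
geometrically. When `r < 1` there is no triangle inequality in `L^r`, so the sum over `j` is split
pointwise into `(∑ wⱼ Aⱼ) (∑ wⱼ⁻¹ Bⱼ)` with geometric weights, and Hölder is applied only once.
-/

section LebesgueNorms

variable {X Y : Type*} [MeasurableSpace X] [MeasurableSpace Y] {μ : Measure X}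

lemma eLpNorm_top_mul_le (U : X → ℝ≥0∞) {V : X → ℝ≥0∞} (hV : AEMeasurable V μ) (q : ℝ≥0∞) :
    eLpNorm (fun x => U x * V x) q μ ≤ eLpNorm U ⊤ μ * eLpNorm V q μ := by
  refine eLpNorm_le_mul_eLpNorm_of_ae_le_mul'' q hV.aestronglyMeasurable ?_
  rw [eLpNorm_exponent_top]
  filter_upwards [ae_le_eLpNormEssSup (f := U) (μ := μ)] with x hx
  simp only [enorm_eq_self] at hx ⊢
  gcongr

lemma eLpNorm_mul_le_of_holderTriple {U V : X → ℝ≥0∞} (hU : AEMeasurable U μ)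
    (hV : AEMeasurable V μ) (p q r : ℝ≥0∞) [hpqr : ENNReal.HolderTriple p q r] :
    eLpNorm (fun x => U x * V x) r μ ≤ eLpNorm U p μ * eLpNorm V q μ := by
  have hinv : p⁻¹ + q⁻¹ = r⁻¹ := ENNReal.HolderTriple.inv_add_inv_eq_inv p q r
  rcases eq_or_ne r 0 with rfl | hr0
  · simp
  have hp0 : p ≠ 0 := by rintro rfl; simp [eq_comm, hr0] at hinv
  have hq0 : q ≠ 0 := by rintro rfl; simp [eq_comm, hr0] at hinv
  rcases eq_or_ne p ⊤ with rfl | hpt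
  · obtain rfl : q = r := by simpa using hinv
    exact eLpNorm_top_mul_le U hV q
  rcases eq_or_ne q ⊤ with rfl | hqt
  · obtain rfl : p = r := by simpa using hinv
    simp_rw [mul_comm (U _), mul_comm (eLpNorm U _ _)]
    exact eLpNorm_top_mul_le V hU p
  have hrt : r ≠ ⊤ := by rintro rfl; simp [hpt] at hinv
  have hreal := ENNReal.HolderTriple.toReal (r := r)
    (ENNReal.toReal_pos hp0 hpt) (ENNReal.toReal_pos hq0 hqt)
  simp_rw [eLpNorm_eq_lintegral_rpow_enorm_toReal hr0 hrt,
    eLpNorm_eq_lintegral_rpow_enorm_toReal hp0 hpt,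
    eLpNorm_eq_lintegral_rpow_enorm_toReal hq0 hqt, enorm_eq_self]
  exact ENNReal.lintegral_Lp_mul_le_Lq_mul_Lr hreal.pos' hreal.lt hreal.one_div_eq μ hU hV

lemma eLpNorm_iSup_le_of_monotone {G : ℕ → X → ℝ≥0∞} (hG : ∀ k, AEMeasurable (G k) μ)
    (hmono : Monotone G) {p M : ℝ≥0∞} (hM : ∀ k, eLpNorm (G k) p μ ≤ M) :
    eLpNorm (fun x => ⨆ k, G k x) p μ ≤ M := by
  rcases eq_or_ne p 0 with rfl | hp0
  · simp
  rcases eq_or_ne p ⊤ with rfl | hpt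
  · rw [eLpNorm_exponent_top]
    refine essSup_le_of_ae_le _ ?_
    filter_upwards [ae_all_iff.2 fun k => ae_le_eLpNormEssSup (f := G k) (μ := μ)] with x hx
    rw [enorm_eq_self]
    exact iSup_le fun k => (hx k).trans (by simpa using hM k)
  have hp : 0 < p.toReal := ENNReal.toReal_pos hp0 hpt
  simp_rw [eLpNorm_eq_lintegral_rpow_enorm_toReal hp0 hpt, enorm_eq_self, one_div,
    ENNReal.rpow_inv_le_iff hp] at hM ⊢
  calc ∫⁻ x, (⨆ k, G k x) ^ p.toReal ∂μ = ∫⁻ x, ⨆ k, G k x ^ p.toReal ∂μ := by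
        simp_rw [(ENNReal.monotone_rpow_of_nonneg hp.le).map_iSup_of_continuousAt
          ENNReal.continuous_rpow_const.continuousAt (ENNReal.zero_rpow_of_pos hp)]
    _ = ⨆ k, ∫⁻ x, G k x ^ p.toReal ∂μ :=
        lintegral_iSup' (fun k => (hG k).pow_const _)
          (.of_forall fun x _ _ h => ENNReal.rpow_le_rpow (hmono h x) hp.le)
    _ ≤ M ^ p.toReal := iSup_le hM

lemma eLpNorm_tsum_le {A : ℕ → X → ℝ≥0∞} (hA : ∀ j, AEMeasurable (A j) μ) {p : ℝ≥0∞}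
    (hp : 1 ≤ p) : eLpNorm (fun x => ∑' j, A j x) p μ ≤ ∑' j, eLpNorm (A j) p μ := by
  simp_rw [ENNReal.tsum_eq_iSup_nat (f := fun j => A j _)]
  refine eLpNorm_iSup_le_of_monotone
    (fun k => Finset.aemeasurable_fun_sum _ fun j _ => hA j)
    (fun k l h x => Finset.sum_le_sum_of_subset (Finset.range_subset_range.2 h)) fun k => ?_
  have hsum := eLpNorm_sum_le (s := Finset.range k) (fun j _ => (hA j).aestronglyMeasurable) hp
  rw [Finset.sum_fn] at hsum
  exact hsum.trans (ENNReal.sum_le_tsum _)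

/-- The exponent `r` may be below `1`, where Minkowski's inequality fails; one therefore sums in
`L^p` and in `L^q`, after splitting each product as `A j * B j = (w j * A j) * ((w j)⁻¹ * B j)`. -/
lemma eLpNorm_tsum_mul_le {A B : ℕ → X → ℝ≥0∞} (hA : ∀ j, AEMeasurable (A j) μ)
    (hB : ∀ j, AEMeasurable (B j) μ) {p q r : ℝ≥0∞} [ENNReal.HolderTriple p q r] (hp : 1 ≤ p)
    (hq : 1 ≤ q) {w : ℕ → ℝ≥0} (hw : ∀ j, w j ≠ 0) :
    eLpNorm (fun x => ∑' j, A j x * B j x) r μ ≤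
      (∑' j, w j * eLpNorm (A j) p μ) * ∑' j, ((w j)⁻¹ : ℝ≥0) * eLpNorm (B j) q μ := by
  have weighted_sum_le : ∀ {F : ℕ → X → ℝ≥0∞} {t : ℝ≥0∞} (v : ℕ → ℝ≥0),
      (∀ j, AEMeasurable (F j) μ) → 1 ≤ t →
      eLpNorm (fun x => ∑' j, v j * F j x) t μ ≤ ∑' j, v j * eLpNorm (F j) t μ :=
    fun v hF ht => (eLpNorm_tsum_le (fun j => (hF j).const_mul _) ht).trans <|
      ENNReal.tsum_le_tsum fun j =>
        eLpNorm_le_mul_eLpNorm_of_ae_le_mul' (.of_forall fun _ => le_rfl) _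
  have pointwise : ∀ x, ∑' j, A j x * B j x ≤
      (∑' j, w j * A j x) * ∑' j, ((w j)⁻¹ : ℝ≥0) * B j x := by
    intro x
    rw [← ENNReal.tsum_mul_left]
    refine ENNReal.tsum_le_tsum fun j => ?_
    calc A j x * B j x = ((w j * (w j)⁻¹ : ℝ≥0) : ℝ≥0∞) * (A j x * B j x) := by
          rw [mul_inv_cancel₀ (hw j), ENNReal.coe_one, one_mul]
      _ = (w j * A j x) * (((w j)⁻¹ : ℝ≥0) * B j x) := by rw [ENNReal.coe_mul]; ring
      _ ≤ (∑' i, w i * A i x) * (((w j)⁻¹ : ℝ≥0) * B j x) := by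
          gcongr
          exact ENNReal.le_tsum (f := fun i => w i * A i x) j
  calc eLpNorm (fun x => ∑' j, A j x * B j x) r μ
      ≤ eLpNorm (fun x => (∑' j, w j * A j x) * ∑' j, ((w j)⁻¹ : ℝ≥0) * B j x) r μ :=
        eLpNorm_mono_enorm pointwise
    _ ≤ eLpNorm (fun x => ∑' j, w j * A j x) p μ *
          eLpNorm (fun x => ∑' j, ((w j)⁻¹ : ℝ≥0) * B j x) q μ :=
        eLpNorm_mul_le_of_holderTriple
          (AEMeasurable.tsum fun j => (hA j).const_mul _)
          (AEMeasurable.tsum fun j => (hB j).const_mul _) p q r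
    _ ≤ _ := mul_le_mul' (weighted_sum_le w hA hp) (weighted_sum_le _ hB hq)

lemma eLpNorm_sum_const_mul_le {ι : Type*} (t : Finset ι) (c : ι → ℝ≥0) {F : ι → X → ℝ≥0∞}
    (hF : ∀ i, AEMeasurable (F i) μ) {p : ℝ≥0∞} (hp : 1 ≤ p) :
    eLpNorm (fun x => ∑ i ∈ t, c i * F i x) p μ ≤ ∑ i ∈ t, c i * eLpNorm (F i) p μ := by
  rw [← Finset.sum_fn]
  refine (eLpNorm_sum_le (fun i _ => ((hF i).const_mul _).aestronglyMeasurable) hp).trans ?_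
  gcongr with i
  exact eLpNorm_le_mul_eLpNorm_of_ae_le_mul' (.of_forall fun x => by simp) p

lemma measurable_eLpNorm_prodMk {ν : Measure Y} [SFinite ν] {F : X → Y → ℝ≥0∞}
    (hF : Measurable (Function.uncurry F)) {s : ℝ≥0∞} (hst : s ≠ ⊤) :
    Measurable fun x => eLpNorm (F x) s ν := by
  rcases eq_or_ne s 0 with rfl | hs0
  · simp
  simp_rw [eLpNorm_eq_lintegral_rpow_enorm_toReal hs0 hst, enorm_eq_self]
  exact (hF.pow_const s.toReal).lintegral_prod_right'.pow_const _

lemma eLpNorm_eLpNorm_self_le [SFinite μ] {ν : Measure Y} [SFinite ν] {F : X → Y → ℝ≥0∞}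
    (hF : Measurable (Function.uncurry F)) {p M : ℝ≥0∞}
    (hM : ∀ᵐ y ∂ν, eLpNorm (fun x => F x y) p μ ≤ M) :
    eLpNorm (fun x => eLpNorm (F x) p ν) p μ ≤ ν Set.univ ^ p⁻¹.toReal * M := by
  rcases eq_or_ne p 0 with rfl | hp0
  · simp
  rcases eq_or_ne p ⊤ with rfl | hpt
  · have hswap : ∀ᵐ x ∂μ, ∀ᵐ y ∂ν, F x y ≤ M := by
      have hset : MeasurableSet {z : X × Y | F z.1 z.2 ≤ M} := measurableSet_le hF measurable_const
      rw [Measure.ae_ae_comm hset]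
      filter_upwards [hM] with y hy
      filter_upwards [ae_le_eLpNormEssSup (f := fun x => F x y) (μ := μ)] with x hx
      exact hx.trans (by simpa using hy)
    simp only [eLpNorm_exponent_top, ENNReal.inv_top, ENNReal.toReal_zero, ENNReal.rpow_zero,
      one_mul]
    refine essSup_le_of_ae_le _ ?_
    filter_upwards [hswap] with x hx
    exact essSup_le_of_ae_le _ hx
  have hp : 0 < p.toReal := ENNReal.toReal_pos hp0 hpt
  simp_rw [eLpNorm_eq_lintegral_rpow_enorm_toReal hp0 hpt, enorm_eq_self, one_div,
    ENNReal.rpow_inv_le_iff hp, ENNReal.rpow_inv_rpow hp.ne'] at hM ⊢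
  calc ∫⁻ x, ∫⁻ y, F x y ^ p.toReal ∂ν ∂μ = ∫⁻ y, ∫⁻ x, F x y ^ p.toReal ∂μ ∂ν :=
        lintegral_lintegral_swap (hF.pow_const _).aemeasurable
    _ ≤ ∫⁻ _, M ^ p.toReal ∂ν := lintegral_mono_ae hM
    _ = (ν Set.univ ^ p⁻¹.toReal * M) ^ p.toReal := by
        rw [lintegral_const, ENNReal.mul_rpow_of_nonneg _ _ hp.le, ENNReal.toReal_inv,
          ENNReal.rpow_inv_rpow hp.ne', mul_comm]

lemma eLpNorm_eLpNorm_le [SFinite μ] {ν : Measure Y} [IsFiniteMeasure ν] {F : X → Y → ℝ≥0∞}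
    (hF : Measurable (Function.uncurry F)) {s p M : ℝ≥0∞} (hsp : s ≤ p)
    (hM : ∀ᵐ y ∂ν, eLpNorm (fun x => F x y) p μ ≤ M) :
    eLpNorm (fun x => eLpNorm (F x) s ν) p μ ≤ ν Set.univ ^ s⁻¹.toReal * M := by
  rcases eq_or_ne s 0 with rfl | hs0
  · simp
  have hexp : 0 ≤ s⁻¹.toReal - p⁻¹.toReal :=
    sub_nonneg.2 (ENNReal.toReal_mono (ENNReal.inv_ne_top.2 hs0) (ENNReal.inv_le_inv.2 hsp))
  obtain ⟨c, hc⟩ : ∃ c : ℝ≥0, c = ν Set.univ ^ (s⁻¹.toReal - p⁻¹.toReal) :=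
    ⟨_, ENNReal.coe_toNNReal (ENNReal.rpow_ne_top_of_nonneg hexp (measure_ne_top ν _))⟩
  have hinner : ∀ x, eLpNorm (F x) s ν ≤ c * eLpNorm (F x) p ν := fun x => by
    rw [hc, mul_comm]
    simpa only [ENNReal.toReal_inv, one_div] using
      eLpNorm_le_eLpNorm_mul_rpow_measure_univ hsp hF.of_uncurry_left.aestronglyMeasurable
  calc eLpNorm (fun x => eLpNorm (F x) s ν) p μ
      ≤ c * eLpNorm (fun x => eLpNorm (F x) p ν) p μ :=
        eLpNorm_le_mul_eLpNorm_of_ae_le_mul' (.of_forall hinner) p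
    _ ≤ c * (ν Set.univ ^ p⁻¹.toReal * M) := by gcongr; exact eLpNorm_eLpNorm_self_le hF hM
    _ = ν Set.univ ^ s⁻¹.toReal * M := by
        rw [← mul_assoc, hc, ← ENNReal.rpow_add_of_nonneg _ _ hexp ENNReal.toReal_nonneg,
          sub_add_cancel]

lemma eLpNorm_eLpNorm_mul_comp_sub_le {G : Type*} [AddGroup G] [MeasurableSpace G]
    [MeasurableAdd₂ G] [MeasurableNeg G] {ν : Measure G} [SFinite ν] [ν.IsAddRightInvariant]
    {W f : G → ℝ≥0∞} (hW : Measurable W) (hf : Measurable f) {s q : ℝ≥0∞} (hst : s ≠ ⊤)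
    (hsq : s ≤ q) (hWs : eLpNorm W s ν ≠ ⊤) :
    eLpNorm (fun x => eLpNorm (fun z => W z * f (x - z)) s ν) q ν ≤
      eLpNorm W s ν * eLpNorm f q ν := by
  rcases eq_or_ne s 0 with rfl | hs0
  · simp
  set κ : Measure G := ν.withDensity fun z => W z ^ s.toReal with hκ
  have hmass : κ Set.univ ^ s⁻¹.toReal = eLpNorm W s ν := by
    rw [hκ, withDensity_apply _ .univ, Measure.restrict_univ,
      eLpNorm_eq_lintegral_rpow_enorm_toReal hs0 hst, ENNReal.toReal_inv, one_div]
    rfl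
  have hfin : IsFiniteMeasure κ := ⟨by
    refine (ENNReal.rpow_lt_top_iff_of_pos (y := s⁻¹.toReal) ?_).1 (hmass ▸ hWs.lt_top)
    exact ENNReal.toReal_pos (ENNReal.inv_ne_zero.2 hst) (ENNReal.inv_ne_top.2 hs0)⟩
  have hdensity : ∀ x, eLpNorm (fun z => W z * f (x - z)) s ν =
      eLpNorm (fun z => f (x - z)) s κ := fun x => by
    have hfx : Measurable fun z => f (x - z) ^ s.toReal :=
      (hf.comp (measurable_const.sub measurable_id)).pow_const _
    simp_rw [eLpNorm_eq_lintegral_rpow_enorm_toReal hs0 hst, enorm_eq_self,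
      ENNReal.mul_rpow_of_nonneg _ _ ENNReal.toReal_nonneg]
    rw [hκ, lintegral_withDensity_eq_lintegral_mul _ (hW.pow_const _) hfx]
    rfl
  simp_rw [hdensity, ← hmass]
  refine eLpNorm_eLpNorm_le (F := fun x z => f (x - z)) (hf.comp measurable_sub) hsq
    (.of_forall fun z => ?_)
  exact (eLpNorm_comp_measurePreserving hf.aestronglyMeasurable
    (measurePreserving_sub_right ν z)).le

lemma eLpNorm_comp_smul {V E : Type*} [NormedAddCommGroup V] [NormedSpace ℝ V]
    [FiniteDimensional ℝ V] [MeasurableSpace V] [BorelSpace V] (ν : Measure V) [ν.IsAddHaarMeasure]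
    [TopologicalSpace E] [ContinuousENorm E] {c : ℝ} (hc : c ≠ 0) (g : V → E) (p : ℝ≥0∞) :
    eLpNorm (fun x => g (c • x)) p ν =
      ENNReal.ofReal |(c ^ Module.finrank ℝ V)⁻¹| ^ p⁻¹.toReal * eLpNorm g p ν := by
  have hmap := (measurableEmbedding_const_smul₀ (α := V) hc).eLpNorm_map_measure
    (g := g) (p := p) (μ := ν)
  rw [Measure.map_addHaar_smul ν hc, eLpNorm_smul_measure_of_ne_zero (by simp [hc]), one_div,
    smul_eq_mul] at hmap
  exact hmap.symm

end LebesgueNorms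

section DyadicSums

variable {X : Type*} [MeasurableSpace X] {μ : Measure X}

lemma tsum_two_rpow_neg_mul_ne_top {ε : ℝ} (hε : 0 < ε) :
    ∑' j : ℕ, (2 : ℝ≥0∞) ^ (-(j * ε)) ≠ ⊤ := by
  have hpow : ∀ j : ℕ, (2 : ℝ≥0∞) ^ (-(j * ε)) = (2 ^ (-ε)) ^ j := fun j => by
    rw [← ENNReal.rpow_natCast, ← ENNReal.rpow_mul]
    congr 1
    ring
  simp_rw [hpow]
  rw [ENNReal.tsum_geometric]
  exact ENNReal.inv_ne_top.2 (tsub_pos_iff_lt.2 (ENNReal.rpow_lt_one_of_one_lt_of_neg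
    ENNReal.one_lt_two (neg_lt_zero.2 hε))).ne'

lemma exists_eLpNorm_tsum_mul_le_of_two_rpow {p q r : ℝ≥0∞} [ENNReal.HolderTriple p q r]
    (hp : 1 ≤ p) (hq : 1 ≤ q) {α β : ℝ} (hαβ : α + β < 0) :
    ∃ S : ℝ≥0, ∀ {A B : ℕ → X → ℝ≥0∞}, (∀ j, AEMeasurable (A j) μ) → (∀ j, AEMeasurable (B j) μ) →
      ∀ {CA CB : ℝ≥0∞}, (∀ j : ℕ, eLpNorm (A j) p μ ≤ CA * 2 ^ (j * α)) →
        (∀ j : ℕ, eLpNorm (B j) q μ ≤ CB * 2 ^ (j * β)) →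
          eLpNorm (fun x => ∑' j, A j x * B j x) r μ ≤ S * (CA * CB) := by
  obtain ⟨ε, hε, hεαβ⟩ : ∃ ε > 0, α + ε + β = -ε := ⟨-(α + β) / 2, by linarith, by ring⟩
  lift ∑' j : ℕ, (2 : ℝ≥0∞) ^ (-(j * ε)) to ℝ≥0 using tsum_two_rpow_neg_mul_ne_top hε with S hS
  refine ⟨S * S, fun {A B} hA hB {CA CB} hCA hCB => ?_⟩
  have hw : ∀ j : ℕ, (2 : ℝ≥0) ^ (-(j * (α + ε))) ≠ 0 := fun j =>
    (NNReal.rpow_pos two_pos).ne'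
  have hadd : ∀ x y : ℝ, (2 : ℝ≥0∞) ^ x * 2 ^ y = 2 ^ (x + y) := fun x y =>
    (ENNReal.rpow_add x y two_ne_zero ENNReal.ofNat_ne_top).symm
  calc eLpNorm (fun x => ∑' j, A j x * B j x) r μ
      ≤ (∑' j : ℕ, (2 ^ (-(j * (α + ε))) : ℝ≥0) * eLpNorm (A j) p μ) *
          ∑' j : ℕ, ((2 ^ (-(j * (α + ε))))⁻¹ : ℝ≥0) * eLpNorm (B j) q μ :=
        eLpNorm_tsum_mul_le hA hB hp hq hw
    _ ≤ (∑' j : ℕ, CA * 2 ^ (-(j * ε))) * ∑' j : ℕ, CB * 2 ^ (-(j * ε)) := by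
        gcongr ?_ * ?_
        · refine ENNReal.tsum_le_tsum fun j => (mul_le_mul_right (hCA j) _).trans_eq ?_
          rw [ENNReal.coe_rpow_of_ne_zero two_ne_zero, ENNReal.coe_ofNat, mul_left_comm, hadd]
          congr 2
          ring
        · refine ENNReal.tsum_le_tsum fun j => (mul_le_mul_right (hCB j) _).trans_eq ?_
          rw [← NNReal.rpow_neg, neg_neg, ENNReal.coe_rpow_of_ne_zero two_ne_zero,
            ENNReal.coe_ofNat, mul_left_comm, hadd, ← mul_add, hεαβ, mul_neg]
    _ = (S * S : ℝ≥0) * (CA * CB) := by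
        rw [ENNReal.tsum_mul_left, ENNReal.tsum_mul_left, ← hS, ENNReal.coe_mul]
        ring

end DyadicSums

section Caratheodory

variable {X Y E : Type*} [MeasurableSpace X] {μ : Measure X}
  [TopologicalSpace Y] [SecondCountableTopology Y] [TopologicalSpace.MetrizableSpace Y]
  [MeasurableSpace Y] [BorelSpace Y]

lemma exists_measurable_uncurry_ae_eq [TopologicalSpace E]
    [TopologicalSpace.PseudoMetrizableSpace E] [MeasurableSpace E] [BorelSpace E] [Nonempty E]
    {b : X → Y → E} (hcont : ∀ x, Continuous (b x))
    (hmeas : ∀ y, AEMeasurable (fun x => b x y) μ) :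
    ∃ b' : X → Y → E, Measurable (Function.uncurry b') ∧ ∀ᵐ x ∂μ, b x = b' x := by
  obtain ⟨D, hDc, hDd⟩ := TopologicalSpace.exists_countable_dense Y
  set good : Set X := {x | ∀ d ∈ D, b x d = (hmeas d).mk _ x}
  set Z := toMeasurable μ goodᶜ with hZ
  have hZnull : ∀ᵐ x ∂μ, x ∉ Z := by
    rw [← measure_eq_zero_iff_ae_notMem, hZ, measure_toMeasurable]
    exact (ae_ball_iff hDc).2 fun d _ => (hmeas d).ae_eq_mk
  have hgoodZ : ∀ x ∉ Z, x ∈ good := fun x hx =>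
    by_contra fun h => hx (subset_toMeasurable μ goodᶜ h)
  set b' : X → Y → E := fun x y => if x ∈ Z then Classical.arbitrary E else b x y with hb'
  have hcont' : ∀ x, Continuous (b' x) := fun x => by
    by_cases hx : x ∈ Z <;> simp only [hb', hx, if_true, if_false]
    · exact continuous_const
    · exact hcont x
  have hmeasD : ∀ d ∈ D, Measurable fun x => b' x d := fun d hd => by
    have hite : (fun x => b' x d) =
        fun x => if x ∈ Z then Classical.arbitrary E else (hmeas d).mk _ x := by
      ext x
      by_cases hx : x ∈ Z
      · simp only [hb', hx, if_true]
      · simpa only [hb', hx, if_false] using hgoodZ x hx d hd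
    rw [hite]
    exact measurable_const.ite (measurableSet_toMeasurable μ _) (hmeas d).measurable_mk
  have hmeas' : ∀ y, Measurable fun x => b' x y := fun y => by
    obtain ⟨u, huD, hu⟩ := mem_closure_iff_seq_limit.1 (hDd y)
    exact measurable_of_tendsto_metrizable (fun k => hmeasD _ (huD k))
      (tendsto_pi_nhds.2 fun x => ((hcont' x).tendsto y).comp hu)
  refine ⟨b', (measurable_uncurry_of_continuous_of_measurable (u := fun y x => b' x y)
    hcont' hmeas').comp measurable_swap, ?_⟩
  filter_upwards [hZnull] with x hx
  ext y
  simp only [hb', hx, if_false]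

variable [NormedAddCommGroup E] {ν : Measure Y} {b : X → Y → E}

lemma exists_measurable_uncurry_ae_eLpNorm_eq (hcont : ∀ x, Continuous (b x))
    (hmeas : ∀ y, AEStronglyMeasurable (fun x => b x y) μ) :
    ∃ F : X → Y → ℝ≥0∞, Measurable (Function.uncurry F) ∧
      (∀ (s : ℝ≥0∞), (fun x => eLpNorm (b x) s ν) =ᵐ[μ] fun x => eLpNorm (F x) s ν) ∧
      ∀ y (p : ℝ≥0∞), eLpNorm (fun x => b x y) p μ = eLpNorm (fun x => F x y) p μ := by
  borelize E
  obtain ⟨b', hb', hae⟩ := exists_measurable_uncurry_ae_eq hcont fun y => (hmeas y).aemeasurable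
  refine ⟨fun x y => ‖b' x y‖ₑ, hb'.enorm, fun s => ?_, fun y p => ?_⟩
  · filter_upwards [hae] with x hx
    rw [eLpNorm_enorm, hx]
  · rw [eLpNorm_enorm]
    refine eLpNorm_congr_ae ?_
    filter_upwards [hae] with x hx
    rw [hx]

lemma aemeasurable_eLpNorm_of_continuous [SFinite ν] (hcont : ∀ x, Continuous (b x))
    (hmeas : ∀ y, AEStronglyMeasurable (fun x => b x y) μ) {s : ℝ≥0∞} (hst : s ≠ ⊤) :
    AEMeasurable (fun x => eLpNorm (b x) s ν) μ := by
  obtain ⟨F, hF, hFb, -⟩ := exists_measurable_uncurry_ae_eLpNorm_eq (ν := ν) hcont hmeas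
  exact (measurable_eLpNorm_prodMk hF hst).aemeasurable.congr (hFb s).symm

lemma eLpNorm_eLpNorm_le_of_continuous [SFinite μ] [IsFiniteMeasure ν]
    (hcont : ∀ x, Continuous (b x)) (hmeas : ∀ y, AEStronglyMeasurable (fun x => b x y) μ)
    {s p M : ℝ≥0∞} (hsp : s ≤ p) (hM : ∀ᵐ y ∂ν, eLpNorm (fun x => b x y) p μ ≤ M) :
    eLpNorm (fun x => eLpNorm (b x) s ν) p μ ≤ ν Set.univ ^ s⁻¹.toReal * M := by
  obtain ⟨F, hF, hFb, hFp⟩ := exists_measurable_uncurry_ae_eLpNorm_eq (ν := ν) hcont hmeas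
  simp_rw [hFp] at hM
  exact (eLpNorm_congr_ae (hFb s)).le.trans (eLpNorm_eLpNorm_le hF hsp hM)

end Caratheodory

section LayerCake

variable {X : Type*} [MeasurableSpace X] {μ : Measure X}

lemma setLIntegral_rpow_of_ofReal_mul_le {a : ℝ} (ha : 0 < a) {c d : ℝ≥0∞} (hc0 : c ≠ 0)
    (hct : c ≠ ⊤) (hdt : d ≠ ⊤) :
    ∫⁻ t in Set.Ioi 0 ∩ {t : ℝ | ENNReal.ofReal t * c ≤ d}, ENNReal.ofReal (t ^ (a - 1)) =
      (d / c) ^ a / ENNReal.ofReal a := by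
  obtain ⟨τ, hτ⟩ : ∃ τ : ℝ≥0, τ = d / c :=
    ⟨_, ENNReal.coe_toNNReal (ENNReal.div_lt_top hdt hc0).ne⟩
  have hset : Set.Ioi 0 ∩ {t : ℝ | ENNReal.ofReal t * c ≤ d} = Set.Ioc 0 (τ : ℝ) := by
    ext t
    simp only [Set.mem_inter_iff, Set.mem_Ioi, Set.mem_ofPred_eq, Set.mem_Ioc,
      ← ENNReal.le_div_iff_mul_le (Or.inl hc0) (Or.inl hct), ← hτ, ← ENNReal.ofReal_coe_nnreal,
      ENNReal.ofReal_le_ofReal_iff τ.coe_nonneg]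
  have hint := intervalIntegral.intervalIntegrable_rpow' (a := 0) (b := (τ : ℝ)) (r := a - 1)
    (by linarith)
  rw [hset, ← ofReal_integral_eq_lintegral_ofReal
      ((intervalIntegrable_iff_integrableOn_Ioc_of_le τ.coe_nonneg).1 hint)
      ((ae_restrict_iff' measurableSet_Ioc).2 (.of_forall fun t ht => rpow_nonneg ht.1.le _)),
    ← intervalIntegral.integral_of_le τ.coe_nonneg, integral_rpow (Or.inl (by linarith)),
    sub_add_cancel, zero_rpow ha.ne', sub_zero, ENNReal.ofReal_div_of_pos ha, ← hτ,
    ← ENNReal.ofReal_rpow_of_nonneg τ.coe_nonneg ha.le, ENNReal.ofReal_coe_nnreal]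

lemma lintegral_setLIntegral_mul_rpow {G H : X → ℝ≥0∞} [SFinite μ] (hG : Measurable G)
    (hH : Measurable H) (hGt : ∀ x, G x ≠ ⊤) (hGH : ∀ x, G x = 0 → H x = 0) {a : ℝ} (ha : 0 < a)
    {d : ℝ≥0∞} (hdt : d ≠ ⊤) :
    ∫⁻ t in Set.Ioi 0, (∫⁻ x in {x | ENNReal.ofReal t * G x ≤ d}, H x ∂μ) *
        ENNReal.ofReal (t ^ (a - 1)) =
      (ENNReal.ofReal a)⁻¹ * ∫⁻ x, H x * (d / G x) ^ a ∂μ := by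
  set A : Set (ℝ × X) := {z | ENNReal.ofReal z.1 * G z.2 ≤ d}
  have hA : MeasurableSet A := measurableSet_le (by fun_prop) measurable_const
  have hAl (x : X) : MeasurableSet {t : ℝ | ENNReal.ofReal t * G x ≤ d} :=
    measurableSet_le (by fun_prop) measurable_const
  have hAr (t : ℝ) : MeasurableSet {x | ENNReal.ofReal t * G x ≤ d} :=
    measurableSet_le (by fun_prop) measurable_const
  set K : ℝ × X → ℝ≥0∞ := A.indicator fun z => H z.2 * ENNReal.ofReal (z.1 ^ (a - 1))
  have hK : Measurable K := Measurable.indicator (by fun_prop) hA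
  calc _ = ∫⁻ t in Set.Ioi 0, ∫⁻ x, K (t, x) ∂μ := by
        refine lintegral_congr fun t => ?_
        rw [← lintegral_mul_const _ hH, ← lintegral_indicator (hAr t)]
        rfl
    _ = ∫⁻ x, (∫⁻ t in Set.Ioi 0, K (t, x)) ∂μ :=
        lintegral_lintegral_swap hK.aemeasurable
    _ = ∫⁻ x, (ENNReal.ofReal a)⁻¹ * (H x * (d / G x) ^ a) ∂μ := by
        refine lintegral_congr fun x => ?_
        rcases eq_or_ne (G x) 0 with hx | hx
        · simp [K, hGH x hx, Set.indicator_apply]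
        calc ∫⁻ t in Set.Ioi 0, K (t, x)
            = ∫⁻ t in Set.Ioi 0, {t : ℝ | ENNReal.ofReal t * G x ≤ d}.indicator
                (fun t => H x * ENNReal.ofReal (t ^ (a - 1))) t := rfl
          _ = H x * ((d / G x) ^ a / ENNReal.ofReal a) := by
            rw [setLIntegral_indicator (hAl x), Set.inter_comm,
              lintegral_const_mul _ (by fun_prop),
              setLIntegral_rpow_of_ofReal_mul_le ha hx (hGt x) hdt]
          _ = _ := by rw [div_eq_mul_inv]; ring
    _ = _ := lintegral_const_mul' _ _ (by simp [ha])

end LayerCake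

section HausdorffYoung

open FourierTransform

lemma eLpNorm_one_indicator_compl_le {X E : Type*} [MeasurableSpace X] {μ : Measure X}
    [NormedAddCommGroup E] {g : X → E} {s : ℝ} (hs : 1 ≤ s) {S T : ℝ≥0∞}
    (hgS : ∫⁻ x, ‖g x‖ₑ ^ s ∂μ = S) (hS0 : S ≠ 0) (hSt : S ≠ ⊤) (hTt : T ≠ ⊤) :
    eLpNorm ({x | T * ‖g x‖ₑ ^ (s - 1) ≤ 2 * S}ᶜ.indicator g) 1 μ ≤ T / 2 := by
  set L := {x | T * ‖g x‖ₑ ^ (s - 1) ≤ 2 * S}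
  have hpt : ∀ x, 2 * S * ‖Lᶜ.indicator g x‖ₑ ≤ T * ‖g x‖ₑ ^ s := fun x => by
    by_cases hx : x ∈ L
    · simp [hx]
    have hlt : 2 * S < T * ‖g x‖ₑ ^ (s - 1) := not_le.1 hx
    calc 2 * S * ‖Lᶜ.indicator g x‖ₑ = 2 * S * ‖g x‖ₑ := by rw [Set.indicator_of_mem (by exact hx)]
      _ ≤ T * ‖g x‖ₑ ^ (s - 1) * ‖g x‖ₑ := mul_le_mul_left hlt.le _
      _ = T * ‖g x‖ₑ ^ s := by
        nth_rw 2 [← ENNReal.rpow_one ‖g x‖ₑ]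
        rw [mul_assoc, ← ENNReal.rpow_add_of_nonneg _ _ (sub_nonneg.2 hs) zero_le_one,
          sub_add_cancel]
  have h2St : 2 * S ≠ ⊤ := ENNReal.mul_ne_top ENNReal.ofNat_ne_top hSt
  rw [eLpNorm_one_eq_lintegral_enorm,
    ← ENNReal.mul_le_mul_iff_right (mul_ne_zero two_ne_zero hS0) h2St,
    ← lintegral_const_mul' _ _ h2St]
  calc ∫⁻ x, 2 * S * ‖Lᶜ.indicator g x‖ₑ ∂μ ≤ ∫⁻ x, T * ‖g x‖ₑ ^ s ∂μ := lintegral_mono hpt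
    _ = 2 * S * (T / 2) := by
      rw [lintegral_const_mul' _ _ hTt, hgS, mul_comm T, mul_comm 2, mul_assoc,
        ENNReal.mul_div_cancel two_ne_zero ENNReal.ofNat_ne_top]

variable {V E : Type*} [NormedAddCommGroup V] [InnerProductSpace ℝ V] [FiniteDimensional ℝ V]
  [MeasurableSpace V] [BorelSpace V] [NormedAddCommGroup E]

section NormedSpace

variable [NormedSpace ℂ E] {g : V → E}

lemma continuous_fourier_of_integrable (hg : Integrable g) : Continuous (𝓕 g) :=
  VectorFourier.fourierIntegral_continuous Real.continuous_fourierChar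
    (innerSL ℝ).continuous₂ hg

lemma fourier_add_of_integrable {f : V → E} (hf : Integrable f) (hg : Integrable g) :
    𝓕 (f + g) = 𝓕 f + 𝓕 g :=
  VectorFourier.fourierIntegral_add Real.continuous_fourierChar (innerSL ℝ).continuous₂ hf hg

lemma enorm_fourier_le_eLpNorm_one (g : V → E) (w : V) : ‖𝓕 g w‖ₑ ≤ eLpNorm g 1 volume := by
  rw [Real.fourier_eq, eLpNorm_one_eq_lintegral_enorm]
  refine (enorm_integral_le_lintegral_enorm _).trans_eq (lintegral_congr fun v => ?_)
  rw [← ofReal_norm, Circle.norm_smul, ofReal_norm]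

end NormedSpace

variable [InnerProductSpace ℂ E] [CompleteSpace E] {g : V → E}

lemma fourier_toLp_two_ae_eq (hg : Integrable g) (hg2 : MemLp g 2) :
    𝓕 g =ᵐ[volume] (𝓕 hg2.toLp : Lp E 2 (volume : Measure V)) := by
  refine ae_eq_of_integral_contDiff_smul_eq
    (continuous_fourier_of_integrable hg).locallyIntegrable
    ((Lp.memLp _).locallyIntegrable one_le_two) fun φ hφ hφc => ?_
  have hφ' : ContDiff ℝ (⊤ : ℕ∞) fun x => (φ x : ℂ) := Complex.ofRealCLM.contDiff.comp hφ
  let Φ : 𝓢(V, ℂ) := (hφc.comp_left Complex.ofReal_zero).toSchwartzMap hφ'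
  have hdual := congrArg (fun T : 𝓢'(V, E) => T Φ)
    (Lp.fourier_toTemperedDistribution_eq hg2.toLp)
  simp only [TemperedDistribution.fourier_apply, Lp.toTemperedDistribution_apply] at hdual
  have hswap : ∫ x, 𝓕 Φ x • g x = ∫ x, Φ x • 𝓕 g x := by
    have h := VectorFourier.integral_fourierIntegral_smul_eq_flip (L := innerₗ V) (μ := volume)
      (ν := volume) Real.continuous_fourierChar (by exact continuous_inner) Φ.integrable hg
    rwa [flip_innerₗ] at h
  have hrep : ∫ x, 𝓕 Φ x • hg2.toLp g x = ∫ x, 𝓕 Φ x • g x := integral_congr_ae <| by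
    filter_upwards [hg2.coeFn_toLp] with x hx
    exact congrArg (𝓕 Φ x • ·) hx
  exact hswap.symm.trans (hrep.symm.trans hdual)

lemma eLpNorm_fourier_two_le (hg : Integrable g) :
    eLpNorm (𝓕 g) 2 volume ≤ eLpNorm g 2 volume := by
  by_cases hg2 : eLpNorm g 2 volume = ⊤
  · simp [hg2]
  have hmem : MemLp g 2 := ⟨hg.1, lt_top_iff_ne_top.2 hg2⟩
  rw [eLpNorm_congr_ae (fourier_toLp_two_ae_eq hg hmem), ← Lp.enorm_def, ← ofReal_norm,
    Lp.norm_fourier_eq, ofReal_norm, Lp.enorm_def, eLpNorm_congr_ae hmem.coeFn_toLp]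

/-- Split `g` at the height `τ` with `T * τ ^ (s - 1) = 2 * S`: the part above `τ` has `L^1` norm at
most `T / 2`, so `T < |𝓕 g|` forces the transform of the part below, controlled in `L^2`, to be at
least `T / 2`. -/
lemma measure_lt_enorm_fourier_le (hg : Integrable g) (hgm : StronglyMeasurable g) {s : ℝ}
    (hs : 1 ≤ s) {S T : ℝ≥0∞} (hgS : ∫⁻ v, ‖g v‖ₑ ^ s = S) (hS0 : S ≠ 0) (hSt : S ≠ ⊤)
    (hT0 : T ≠ 0) (hTt : T ≠ ⊤) :
    volume {w | T < ‖𝓕 g w‖ₑ} ≤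
      (T / 2)⁻¹ ^ 2 * ∫⁻ v in {v | T * ‖g v‖ₑ ^ (s - 1) ≤ 2 * S}, ‖g v‖ₑ ^ 2 := by
  have hhigh_le := eLpNorm_one_indicator_compl_le hs hgS hS0 hSt hTt
  set L := {v | T * ‖g v‖ₑ ^ (s - 1) ≤ 2 * S}
  have hLm : MeasurableSet L :=
    measurableSet_le ((hgm.enorm.pow_const _).const_mul _) measurable_const
  have hlow : Integrable (L.indicator g) := hg.indicator hLm
  have hsplit : 𝓕 g = 𝓕 (L.indicator g) + 𝓕 (Lᶜ.indicator g) := by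
    rw [← fourier_add_of_integrable hlow (hg.indicator hLm.compl), Set.indicator_self_add_compl]
  have hsub : {w | T < ‖𝓕 g w‖ₑ} ⊆ {w | T / 2 ≤ ‖𝓕 (L.indicator g) w‖ₑ} := fun w hw => by
    by_contra h
    refine (show T < ‖𝓕 g w‖ₑ from hw).not_ge ?_
    rw [hsplit, ← ENNReal.add_halves T]
    exact (enorm_add_le _ _).trans
      (add_le_add (not_le.1 h).le ((enorm_fourier_le_eLpNorm_one _ w).trans hhigh_le))
  calc volume {w | T < ‖𝓕 g w‖ₑ}
      ≤ (T / 2)⁻¹ ^ (2 : ℝ≥0∞).toReal *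
          eLpNorm (𝓕 (L.indicator g)) 2 volume ^ (2 : ℝ≥0∞).toReal :=
        (measure_mono hsub).trans <| meas_ge_le_mul_pow_eLpNorm_enorm _ two_ne_zero
          ENNReal.ofNat_ne_top (continuous_fourier_of_integrable hlow).aestronglyMeasurable
          (ENNReal.half_pos hT0).ne' fun h => absurd h (ENNReal.div_lt_top hTt two_ne_zero).ne
    _ ≤ (T / 2)⁻¹ ^ (2 : ℝ≥0∞).toReal *
          eLpNorm (L.indicator g) 2 volume ^ (2 : ℝ≥0∞).toReal := by
        gcongr
        exact eLpNorm_fourier_two_le hlow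
    _ = (T / 2)⁻¹ ^ 2 * ∫⁻ v in L, ‖g v‖ₑ ^ 2 := by
        rw [eLpNorm_indicator_eq_eLpNorm_restrict hLm,
          eLpNorm_eq_lintegral_rpow_enorm_toReal two_ne_zero ENNReal.ofNat_ne_top, one_div,
          ENNReal.rpow_inv_rpow (by norm_num), ENNReal.toReal_ofNat]
        simp only [ENNReal.rpow_two]

lemma measure_lt_norm_fourier_mul_rpow_le (hg : Integrable g) (hgm : StronglyMeasurable g)
    {s : ℝ} (hs : 1 ≤ s) {S : ℝ≥0∞} (hgS : ∫⁻ v, ‖g v‖ₑ ^ s = S) (hS0 : S ≠ 0) (hSt : S ≠ ⊤)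
    (b : ℝ) {t : ℝ} (ht : 0 < t) :
    volume {w | t < ‖𝓕 g w‖} * ENNReal.ofReal (t ^ (b - 1)) ≤
      4 * ((∫⁻ v in {v | ENNReal.ofReal t * ‖g v‖ₑ ^ (s - 1) ≤ 2 * S}, ‖g v‖ₑ ^ 2) *
        ENNReal.ofReal (t ^ (b - 2 - 1))) := by
  have hlevel : {w | t < ‖𝓕 g w‖} = {w | ENNReal.ofReal t < ‖𝓕 g w‖ₑ} := by
    ext w
    simp only [Set.mem_ofPred_eq, ← ofReal_norm, ENNReal.ofReal_lt_ofReal_iff_of_nonneg ht.le]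
  have hpow : (ENNReal.ofReal t / 2)⁻¹ ^ 2 * ENNReal.ofReal (t ^ (b - 1)) =
      4 * ENNReal.ofReal (t ^ (b - 2 - 1)) := by
    have hreal : (t / 2)⁻¹ ^ 2 * t ^ (b - 1) = 4 * t ^ (b - 2 - 1) := by
      rw [show b - 1 = b - 2 - 1 + (2 : ℕ) by push_cast; ring, rpow_add_natCast ht.ne']
      field_simp
      ring
    rw [← ENNReal.ofReal_ofNat 2, ← ENNReal.ofReal_div_of_pos two_pos,
      ← ENNReal.ofReal_inv_of_pos (half_pos ht), ← ENNReal.ofReal_pow (by positivity),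
      ← ENNReal.ofReal_mul (by positivity), hreal, ENNReal.ofReal_mul (by norm_num),
      ENNReal.ofReal_ofNat]
  rw [hlevel, mul_left_comm, ← hpow, ← mul_assoc]
  gcongr
  rw [mul_comm]
  exact measure_lt_enorm_fourier_le hg hgm hs hgS hS0 hSt (ENNReal.ofReal_pos.2 ht).ne'
    ENNReal.ofReal_ne_top

lemma sq_mul_div_rpow_conjExponent_sub_two {s s' : ℝ} (hss' : s.HolderConjugate s') (hs2 : 2 ≤ s')
    {u : ℝ≥0∞} (hu : u ≠ ⊤) (c : ℝ≥0∞) :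
    u ^ 2 * (c / u ^ (s - 1)) ^ (s' - 2) = c ^ (s' - 2) * u ^ s := by
  rcases eq_or_ne u 0 with rfl | hu0
  · simp [ENNReal.zero_rpow_of_pos hss'.pos]
  have hexp : s = 2 + -((s - 1) * (s' - 2)) := by linear_combination hss'.sub_one_mul_conj
  nth_rw 2 [hexp]
  rw [ENNReal.rpow_add _ _ hu0 hu, ENNReal.rpow_neg, ENNReal.rpow_mul, ENNReal.rpow_two,
    ENNReal.div_rpow_of_nonneg _ _ (sub_nonneg.2 hs2), div_eq_mul_inv, mul_left_comm]

lemma lintegral_enorm_fourier_rpow_le (hg : Integrable g) (hgm : StronglyMeasurable g) {s s' : ℝ}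
    (hss' : s.HolderConjugate s') (hs2 : 2 < s') {S : ℝ≥0∞} (hgS : ∫⁻ v, ‖g v‖ₑ ^ s = S)
    (hS0 : S ≠ 0) (hSt : S ≠ ⊤) :
    ∫⁻ w, ‖𝓕 g w‖ₑ ^ s' ≤
      ENNReal.ofReal s' * 4 * (ENNReal.ofReal (s' - 2))⁻¹ * 2 ^ (s' - 2) * S ^ (s' - 1) := by
  have ha : 0 < s' - 2 := sub_pos.2 hs2
  have h2St : 2 * S ≠ ⊤ := ENNReal.mul_ne_top ENNReal.ofNat_ne_top hSt
  calc ∫⁻ w, ‖𝓕 g w‖ₑ ^ s' = ∫⁻ w, ENNReal.ofReal (‖𝓕 g w‖ ^ s') :=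
        lintegral_congr fun w => by
          rw [← ofReal_norm, ENNReal.ofReal_rpow_of_nonneg (norm_nonneg _) hss'.symm.nonneg]
    _ = ENNReal.ofReal s' * ∫⁻ t in Set.Ioi 0,
          volume {w | t < ‖𝓕 g w‖} * ENNReal.ofReal (t ^ (s' - 1)) :=
        lintegral_rpow_eq_lintegral_meas_lt_mul _ (.of_forall fun _ => norm_nonneg _)
          (continuous_fourier_of_integrable hg).norm.aemeasurable hss'.symm.pos
    _ ≤ ENNReal.ofReal s' * ∫⁻ t in Set.Ioi 0,
          4 * ((∫⁻ v in {v | ENNReal.ofReal t * ‖g v‖ₑ ^ (s - 1) ≤ 2 * S}, ‖g v‖ₑ ^ 2) *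
            ENNReal.ofReal (t ^ (s' - 2 - 1))) :=
        mul_le_mul_right (setLIntegral_mono' measurableSet_Ioi fun t ht =>
          measure_lt_norm_fourier_mul_rpow_le hg hgm hss'.lt.le hgS hS0 hSt s' ht) _
    _ = ENNReal.ofReal s' * (4 * ((ENNReal.ofReal (s' - 2))⁻¹ *
          ∫⁻ v, ‖g v‖ₑ ^ 2 * (2 * S / ‖g v‖ₑ ^ (s - 1)) ^ (s' - 2))) := by
        rw [lintegral_const_mul' _ _ ENNReal.ofNat_ne_top, lintegral_setLIntegral_mul_rpow
          (hgm.enorm.pow_const _) (hgm.enorm.pow_const _)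
          (fun v => ENNReal.rpow_ne_top_of_nonneg hss'.sub_one_pos.le enorm_ne_top)
          (fun v hv => by
            rw [(ENNReal.rpow_eq_zero_iff_of_pos hss'.sub_one_pos).1 hv, zero_pow two_ne_zero])
          ha h2St]
    _ = _ := by
        have hS : S ^ (s' - 1) = S ^ (s' - 2) * S := by
          nth_rw 3 [← ENNReal.rpow_one S]
          rw [← ENNReal.rpow_add _ _ hS0 hSt]
          ring_nf
        simp_rw [sq_mul_div_rpow_conjExponent_sub_two hss' hs2.le enorm_ne_top]
        rw [lintegral_const_mul' _ _ (ENNReal.rpow_ne_top_of_nonneg ha.le h2St), hgS,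
          ENNReal.mul_rpow_of_nonneg _ _ ha.le, hS]
        ring

lemma eLpNorm_fourier_le_of_two_lt (hg : Integrable g) (hgm : StronglyMeasurable g) {s s' : ℝ}
    (hss' : s.HolderConjugate s') (hs2 : 2 < s') :
    eLpNorm (𝓕 g) (ENNReal.ofReal s') volume ≤
      (ENNReal.ofReal s' * 4 * (ENNReal.ofReal (s' - 2))⁻¹ * 2 ^ (s' - 2)) ^ s'⁻¹ *
        eLpNorm g (ENNReal.ofReal s) volume := by
  have hs := hss'.pos
  have hs' := hss'.symm.pos
  have hs0 : ENNReal.ofReal s ≠ 0 := (ENNReal.ofReal_pos.2 hs).ne'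
  have hs0' : ENNReal.ofReal s' ≠ 0 := (ENNReal.ofReal_pos.2 hs').ne'
  rcases eq_or_ne (eLpNorm g (ENNReal.ofReal s) volume) 0 with hg0 | hg0
  · have hg1 : eLpNorm g 1 volume = 0 := by
      rw [eLpNorm_eq_zero_iff hg.1 hs0] at hg0
      rw [eLpNorm_congr_ae hg0, eLpNorm_zero]
    have hzero : 𝓕 g = 0 := funext fun w => enorm_eq_zero.1 <|
      le_bot_iff.1 ((enorm_fourier_le_eLpNorm_one g w).trans hg1.le)
    simp [hzero]
  rcases eq_or_ne (eLpNorm g (ENNReal.ofReal s) volume) ⊤ with hgt | hgt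
  · rw [hgt, ENNReal.mul_top]
    · exact le_top
    · simp [hs', hs'.le, ENNReal.rpow_eq_zero_iff]
  set S := ∫⁻ v, ‖g v‖ₑ ^ s with hS
  have hgS : eLpNorm g (ENNReal.ofReal s) volume = S ^ s⁻¹ := by
    rw [eLpNorm_eq_lintegral_rpow_enorm_toReal hs0 ENNReal.ofReal_ne_top,
      ENNReal.toReal_ofReal hs.le, one_div]
  rw [hgS] at hg0 hgt ⊢
  have hS0 : S ≠ 0 := by rintro h; simp [h, hs] at hg0
  have hSt : S ≠ ⊤ := by rintro h; simp [h, hs] at hgt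
  have hexp : S ^ (s' - 1) = (S ^ s⁻¹) ^ s' := by
    rw [← ENNReal.rpow_mul, ← hss'.symm.div_conj_eq_sub_one, div_eq_inv_mul]
  rw [eLpNorm_eq_lintegral_rpow_enorm_toReal hs0' ENNReal.ofReal_ne_top,
    ENNReal.toReal_ofReal hs'.le, one_div, ENNReal.rpow_inv_le_iff hs',
    ENNReal.mul_rpow_of_nonneg _ _ hs'.le, ENNReal.rpow_inv_rpow hs'.ne', ← hexp]
  exact lintegral_enorm_fourier_rpow_le hg hgm hss' hs2 rfl hS0 hSt

lemma exists_eLpNorm_fourier_le_of_two_lt (V E : Type*) [NormedAddCommGroup V]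
    [InnerProductSpace ℝ V] [FiniteDimensional ℝ V] [MeasurableSpace V] [BorelSpace V]
    [NormedAddCommGroup E] [InnerProductSpace ℂ E] [CompleteSpace E] {s s' : ℝ}
    (hss' : s.HolderConjugate s') (hs2 : 2 < s') :
    ∃ K : ℝ≥0, ∀ g : V → E, Integrable g →
      eLpNorm (𝓕 g) (ENNReal.ofReal s') volume ≤ K * eLpNorm g (ENNReal.ofReal s) volume := by
  set c : ℝ≥0∞ := (ENNReal.ofReal s' * 4 * (ENNReal.ofReal (s' - 2))⁻¹ * 2 ^ (s' - 2)) ^ s'⁻¹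
  have hc : c ≠ ⊤ := by
    refine ENNReal.rpow_ne_top_of_nonneg (inv_nonneg.2 hss'.symm.nonneg) ?_
    refine ENNReal.mul_ne_top (ENNReal.mul_ne_top (by finiteness) ?_) ?_
    · simpa using hs2
    · exact ENNReal.rpow_ne_top_of_nonneg (sub_pos.2 hs2).le ENNReal.ofNat_ne_top
  refine ⟨c.toNNReal, fun g hg => ?_⟩
  have hmk := hg.1.ae_eq_mk
  have hfourier : 𝓕 (hg.1.mk g) = 𝓕 g := funext (Real.fourier_congr_ae hmk.symm)
  rw [ENNReal.coe_toNNReal hc, eLpNorm_congr_ae hmk, ← hfourier]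
  exact eLpNorm_fourier_le_of_two_lt (hg.congr hmk) hg.1.stronglyMeasurable_mk hss' hs2

lemma exists_eLpNorm_fourier_le (V E : Type*) [NormedAddCommGroup V] [InnerProductSpace ℝ V]
    [FiniteDimensional ℝ V] [MeasurableSpace V] [BorelSpace V] [NormedAddCommGroup E]
    [InnerProductSpace ℂ E] [CompleteSpace E] {s s' : ℝ≥0∞} [ENNReal.HolderConjugate s s']
    (hs2 : s ≤ 2) :
    ∃ K : ℝ≥0, ∀ g : V → E, Integrable g → eLpNorm (𝓕 g) s' volume ≤ K * eLpNorm g s volume := by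
  rcases eq_or_ne s 1 with rfl | hs1
  · obtain rfl : s' = ⊤ := (ENNReal.HolderConjugate.eq_top_iff_eq_one s' 1).2 rfl
    refine ⟨1, fun g _ => ?_⟩
    rw [ENNReal.coe_one, one_mul, eLpNorm_exponent_top]
    exact essSup_le_of_ae_le _ (.of_forall (enorm_fourier_le_eLpNorm_one g))
  rcases hs2.eq_or_lt with rfl | hs2
  · obtain rfl : s' = 2 := ENNReal.HolderConjugate.unique 2 s' 2
    exact ⟨1, fun g hg => by simpa using eLpNorm_fourier_two_le hg⟩
  have hst : s ≠ ⊤ := hs2.ne_top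
  have hst' : s' ≠ ⊤ := fun h => hs1 ((ENNReal.HolderConjugate.eq_top_iff_eq_one s' s).1 h)
  have hreal : s.toReal.HolderConjugate s'.toReal :=
    ENNReal.HolderConjugate.toReal_of_ne_top hst hst'
  have hs2' : 2 < s'.toReal := by
    have hlt : s.toReal < 2 := by simpa using ENNReal.toReal_strict_mono ENNReal.ofNat_ne_top hs2
    nlinarith [hreal.mul_eq_add, hreal.lt, hreal.symm.lt]
  simpa only [ENNReal.ofReal_toReal hst, ENNReal.ofReal_toReal hst'] using
    exists_eLpNorm_fourier_le_of_two_lt V E hreal hs2'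

end HausdorffYoung

section PartialDerivatives

variable {n : ℕ}

section NormedSpace

variable {F : Type} [NormedAddCommGroup F] [NormedSpace ℝ F] {f g : En n → F}

lemma contDiff_iterate_pd (i : Fin n) (hf : ContDiff ℝ (⊤ : ℕ∞) f) (k : ℕ) :
    ContDiff ℝ (⊤ : ℕ∞) ((pd i)^[k] f) := by
  induction k with
  | zero => exact hf
  | succ k ih =>
    rw [Function.iterate_succ_apply']
    exact (ih.fderiv_right (m := (⊤ : ℕ∞)) (by simp)).clm_apply contDiff_const

lemma tsupport_iterate_pd_subset (i : Fin n) (f : En n → F) (k : ℕ) :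
    tsupport ((pd i)^[k] f) ⊆ tsupport f := by
  induction k with
  | zero => exact subset_rfl
  | succ k ih =>
    rw [Function.iterate_succ_apply']
    exact (tsupport_fderiv_apply_subset ℝ _).trans ih

lemma hasCompactSupport_iterate_pd (i : Fin n) (hf : HasCompactSupport f) (k : ℕ) :
    HasCompactSupport ((pd i)^[k] f) :=
  hf.of_isClosed_subset (isClosed_tsupport _) (tsupport_iterate_pd_subset i f k)

lemma mderiv_zero (f : En n → F) : mderiv 0 f = f := by
  simp [mderiv]

lemma mderiv_single (i : Fin n) (k : ℕ) (f : En n → F) :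
    mderiv (Pi.single i k) f = (pd i)^[k] f := by
  have hfold : ∀ l : List (Fin n), l.Nodup →
      l.foldr (fun j g => (pd j)^[(Pi.single i k : Fin n → ℕ) j] g) f =
        if i ∈ l then (pd i)^[k] f else f := fun l => by
    induction l with
    | nil => simp
    | cons j l ih =>
      intro hl
      rw [List.nodup_cons] at hl
      rw [List.foldr_cons, ih hl.2]
      rcases eq_or_ne j i with rfl | hij
      · simp [hl.1]
      · simp [hij, hij.symm]
  rw [mderiv, hfold _ (List.nodup_finRange n), if_pos (List.mem_finRange i)]

lemma mdeg_single (i : Fin n) (k : ℕ) : mdeg (Pi.single i k : Fin n → ℕ) = k := by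
  simp [mdeg]

lemma contDiff_slice (hf : ContDiff ℝ (⊤ : ℕ∞) f) (v ξ : En n) :
    ContDiff ℝ (⊤ : ℕ∞) fun t : ℝ => f (ξ + t • v) :=
  hf.comp (contDiff_const.add (contDiff_id.smul contDiff_const))

lemma iterate_pd_apply_eq_iteratedDeriv (i : Fin n) (hf : ContDiff ℝ (⊤ : ℕ∞) f) (k : ℕ)
    (ξ : En n) :
    (pd i)^[k] f ξ =
      iteratedDeriv k (fun t : ℝ => f (ξ + t • EuclideanSpace.single i (1 : ℝ))) 0 := by
  induction k generalizing f with
  | zero => simp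
  | succ k ih =>
    rw [Function.iterate_succ_apply, iteratedDeriv_succ',
      ih (show ContDiff ℝ (⊤ : ℕ∞) (pd i f) from contDiff_iterate_pd i hf 1)]
    congr 1
    ext t
    have hline : HasDerivAt (fun t : ℝ => ξ + t • EuclideanSpace.single i (1 : ℝ))
        (EuclideanSpace.single i 1) t := by
      simpa using ((hasDerivAt_id t).smul_const (EuclideanSpace.single i (1 : ℝ))).const_add ξ
    exact ((hf.differentiable (by simp) _).hasFDerivAt.comp_hasDerivAt t hline).deriv.symm

lemma iterate_pd_sub_apply (i : Fin n) (hf : ContDiff ℝ (⊤ : ℕ∞) f) (hg : ContDiff ℝ (⊤ : ℕ∞) g)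
    (k : ℕ) (ξ : En n) :
    (pd i)^[k] (f - g) ξ = (pd i)^[k] f ξ - (pd i)^[k] g ξ := by
  rw [iterate_pd_apply_eq_iteratedDeriv i hf, iterate_pd_apply_eq_iteratedDeriv i hg,
    iterate_pd_apply_eq_iteratedDeriv i (show ContDiff ℝ (⊤ : ℕ∞) (f - g) from hf.sub hg)]
  exact iteratedDeriv_sub ((contDiff_slice hf _ ξ).of_le (by exact_mod_cast le_top)).contDiffAt
    ((contDiff_slice hg _ ξ).of_le (by exact_mod_cast le_top)).contDiffAt

lemma iterate_pd_comp_smul_apply (i : Fin n) (hf : ContDiff ℝ (⊤ : ℕ∞) f) (c : ℝ) (k : ℕ)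
    (ξ : En n) :
    (pd i)^[k] (fun ξ => f (c • ξ)) ξ = c ^ k • (pd i)^[k] f (c • ξ) := by
  have hscaled : ContDiff ℝ (⊤ : ℕ∞) fun ξ => f (c • ξ) := hf.comp (contDiff_const_smul c)
  have hslice := iteratedDeriv_comp_const_smul (n := k)
    ((contDiff_slice hf (EuclideanSpace.single i 1) (c • ξ)).of_le (by exact_mod_cast le_top)) c
  rw [iterate_pd_apply_eq_iteratedDeriv i hf, iterate_pd_apply_eq_iteratedDeriv i hscaled]
  simpa only [smul_add, smul_smul, smul_eq_mul, mul_zero] using congrFun hslice 0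

end NormedSpace

variable {ψ b : En n → ℂ}

lemma iterate_pd_mul_apply (i : Fin n) (hψ : ContDiff ℝ (⊤ : ℕ∞) ψ) (hb : ContDiff ℝ (⊤ : ℕ∞) b)
    (N : ℕ) (ξ : En n) :
    (pd i)^[N] (ψ * b) ξ =
      ∑ k ∈ Finset.range (N + 1), N.choose k * (pd i)^[k] ψ ξ * (pd i)^[N - k] b ξ := by
  simp_rw [iterate_pd_apply_eq_iteratedDeriv i hψ, iterate_pd_apply_eq_iteratedDeriv i hb,
    iterate_pd_apply_eq_iteratedDeriv i (show ContDiff ℝ (⊤ : ℕ∞) (ψ * b) from hψ.mul hb)]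
  exact iteratedDeriv_mul ((contDiff_slice hψ _ ξ).of_le (by exact_mod_cast le_top)).contDiffAt
    ((contDiff_slice hb _ ξ).of_le (by exact_mod_cast le_top)).contDiffAt

lemma pow_mul_enorm_iterate_pd_mul_le (i : Fin n) (hψ : ContDiff ℝ (⊤ : ℕ∞) ψ)
    (hb : ContDiff ℝ (⊤ : ℕ∞) b) {R D : ℝ≥0∞} {N : ℕ} {ξ : En n}
    (hD : ∀ k ≤ N, R ^ k * ‖(pd i)^[k] ψ ξ‖ₑ ≤ D) :
    R ^ N * ‖(pd i)^[N] (ψ * b) ξ‖ₑ ≤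
      2 ^ N * D * ∑ k ∈ Finset.range (N + 1), R ^ k * ‖(pd i)^[k] b ξ‖ₑ := by
  set sumb := ∑ k ∈ Finset.range (N + 1), R ^ k * ‖(pd i)^[k] b ξ‖ₑ
  have hterm : ∀ k ∈ Finset.range (N + 1),
      R ^ N * ‖N.choose k * (pd i)^[k] ψ ξ * (pd i)^[N - k] b ξ‖ₑ ≤ N.choose k * (D * sumb) := by
    intro k hk
    have hkN : k ≤ N := Finset.mem_range_succ_iff.1 hk
    have hb_le : R ^ (N - k) * ‖(pd i)^[N - k] b ξ‖ₑ ≤ sumb :=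
      Finset.single_le_sum (f := fun k => R ^ k * ‖(pd i)^[k] b ξ‖ₑ) (fun _ _ => zero_le)
        (Finset.mem_range_succ_iff.2 (N.sub_le k))
    calc R ^ N * ‖N.choose k * (pd i)^[k] ψ ξ * (pd i)^[N - k] b ξ‖ₑ
        = N.choose k * ((R ^ k * ‖(pd i)^[k] ψ ξ‖ₑ) *
            (R ^ (N - k) * ‖(pd i)^[N - k] b ξ‖ₑ)) := by
          have hchoose : ‖(N.choose k : ℂ)‖ₑ = N.choose k := by simp [enorm_eq_nnnorm]
          rw [enorm_mul, enorm_mul, hchoose, ← pow_mul_pow_sub R hkN]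
          ring
      _ ≤ N.choose k * (D * sumb) := by
          gcongr
          exact hD k hkN
  calc R ^ N * ‖(pd i)^[N] (ψ * b) ξ‖ₑ
      ≤ R ^ N * ∑ k ∈ Finset.range (N + 1),
          ‖N.choose k * (pd i)^[k] ψ ξ * (pd i)^[N - k] b ξ‖ₑ := by
        rw [iterate_pd_mul_apply i hψ hb]
        gcongr
        exact enorm_sum_le _ _
    _ ≤ ∑ k ∈ Finset.range (N + 1), N.choose k * (D * sumb) := by
        rw [Finset.mul_sum]
        exact Finset.sum_le_sum hterm
    _ = 2 ^ N * D * sumb := by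
        rw [← Finset.sum_mul, ← mul_assoc]
        congr 2
        exact_mod_cast Nat.sum_range_choose N

end PartialDerivatives

section MultiplierKernel

open FourierTransform

section Fourier

variable {V : Type*} [NormedAddCommGroup V] [InnerProductSpace ℝ V] [FiniteDimensional ℝ V]
  [MeasurableSpace V] [BorelSpace V]

/-- The kernel of the Fourier multiplier operator with symbol `g`: an inverse Fourier transform,
in the convention with angular frequencies and without the factor `(2π)^(-dim V)`. -/
def multiplierKernel (g : V → ℂ) (z : V) : ℂ :=
  ∫ ξ, exp (I * ofReal ⟪z, ξ⟫) * g ξ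

variable {g : V → ℂ}

lemma multiplierKernel_eq_fourier (g : V → ℂ) (z : V) :
    multiplierKernel g z = 𝓕 g (-(2 * π)⁻¹ • z) := by
  rw [Real.fourier_eq', multiplierKernel]
  refine integral_congr_ae (.of_forall fun ξ => ?_)
  have hphase : -2 * π * ⟪ξ, -(2 * π)⁻¹ • z⟫ = ⟪z, ξ⟫ := by
    rw [inner_smul_right, real_inner_comm]
    field_simp
  simp only [hphase, smul_eq_mul, mul_comm I]

lemma continuous_multiplierKernel (hg : Integrable g) : Continuous (multiplierKernel g) := by
  rw [funext (multiplierKernel_eq_fourier g)]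
  exact (continuous_fourier_of_integrable hg).comp (continuous_const_smul _)

lemma exists_eLpNorm_multiplierKernel_le (V : Type*) [NormedAddCommGroup V]
    [InnerProductSpace ℝ V] [FiniteDimensional ℝ V] [MeasurableSpace V] [BorelSpace V]
    {s s' : ℝ≥0∞} [ENNReal.HolderConjugate s s'] (hs2 : s ≤ 2) :
    ∃ K : ℝ≥0, ∀ g : V → ℂ, Integrable g →
      eLpNorm (multiplierKernel g) s' volume ≤ K * eLpNorm g s volume := by
  obtain ⟨K, hK⟩ := exists_eLpNorm_fourier_le V ℂ (s := s) (s' := s') hs2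
  have hc : -(2 * π)⁻¹ ≠ 0 := by simp [pi_ne_zero]
  set J : ℝ≥0 := Real.toNNReal |((-(2 * π)⁻¹) ^ Module.finrank ℝ V)⁻¹|
  refine ⟨J ^ s'⁻¹.toReal * K, fun g hg => ?_⟩
  rw [funext (multiplierKernel_eq_fourier g), eLpNorm_comp_smul volume hc, ENNReal.coe_mul,
    mul_assoc, ENNReal.coe_rpow_of_nonneg _ ENNReal.toReal_nonneg]
  gcongr
  · rfl
  · exact hK g hg

end Fourier

variable {n : ℕ} {g f : En n → ℂ}

lemma multiplierKernel_pd (i : Fin n) (hg : ContDiff ℝ (⊤ : ℕ∞) g) (hc : HasCompactSupport g)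
    (z : En n) : multiplierKernel (pd i g) z = -(I * z i) * multiplierKernel g z := by
  have hfderiv : Integrable (fderiv ℝ g) :=
    (hg.continuous_fderiv (by simp)).integrable_of_hasCompactSupport (hc.fderiv ℝ)
  have happly := Real.fourier_continuousLinearMap_apply (v := -(2 * π)⁻¹ • z)
    (a := EuclideanSpace.single i (1 : ℝ)) hfderiv
  rw [Real.fourier_fderiv (hg.continuous.integrable_of_hasCompactSupport hc)
    (hg.differentiable (by simp)) hfderiv] at happly
  rw [multiplierKernel_eq_fourier, multiplierKernel_eq_fourier]
  have hcoord : innerSL ℝ z (EuclideanSpace.single i (1 : ℝ)) = z i := by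
    rw [innerSL_apply_apply, EuclideanSpace.inner_single_right, one_mul, conj_trivial]
  refine happly.symm.trans ?_
  simp only [mul_inv_rev, neg_smul, VectorFourier.fourierSMulRight_apply, neg_apply, map_neg,
    map_smul, smul_apply, hcoord, smul_eq_mul, real_smul, ofReal_mul, ofReal_inv, ofReal_ofNat,
    ofReal_neg, neg_mul, neg_inj]
  field_simp

lemma norm_multiplierKernel_iterate_pd (i : Fin n) (hg : ContDiff ℝ (⊤ : ℕ∞) g)
    (hc : HasCompactSupport g) (N : ℕ) (z : En n) :
    ‖multiplierKernel ((pd i)^[N] g) z‖ = |z i| ^ N * ‖multiplierKernel g z‖ := by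
  induction N with
  | zero => simp
  | succ N ih =>
    rw [Function.iterate_succ_apply', multiplierKernel_pd i (contDiff_iterate_pd i hg N)
      (hasCompactSupport_iterate_pd i hc N), norm_mul, ih, norm_neg, norm_mul, norm_I, norm_real,
      Real.norm_eq_abs]
    ring

lemma integral_exp_mul_ft_eq (hg : Integrable g) (hf : Integrable f) (x : En n) :
    ∫ ξ, exp (I * ofReal ⟪x, ξ⟫) * g ξ * ft f ξ = ∫ z, multiplierKernel g z * f (x - z) := by
  have hint : Integrable (fun y : En n × En n => exp (I * ofReal ⟪x - y.2, y.1⟫) * (g y.1 * f y.2))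
      (volume.prod volume) :=
    (hg.mul_prod hf).bdd_mul (c := 1) (Continuous.aestronglyMeasurable (by fun_prop))
      (.of_forall fun y => by rw [mul_comm, norm_exp_ofReal_mul_I])
  have hexp : ∀ y ξ : En n, exp (I * ofReal ⟪x - y, ξ⟫) =
      exp (I * ofReal ⟪x, ξ⟫) * exp (-(I * ofReal ⟪y, ξ⟫)) := fun y ξ => by
    rw [← Complex.exp_add, inner_sub_left, ofReal_sub, mul_sub, sub_eq_add_neg]
  calc ∫ ξ, exp (I * ofReal ⟪x, ξ⟫) * g ξ * ft f ξ
      = ∫ ξ, ∫ y, exp (I * ofReal ⟪x - y, ξ⟫) * (g ξ * f y) := by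
        refine integral_congr_ae (.of_forall fun ξ => ?_)
        simp only [ft, ← integral_const_mul, hexp]
        refine integral_congr_ae (.of_forall fun y => ?_)
        ring
    _ = ∫ y, multiplierKernel g (x - y) * f y := by
        rw [integral_integral_swap hint]
        simp only [multiplierKernel, ← integral_mul_const, mul_assoc]
    _ = ∫ z, multiplierKernel g z * f (x - z) := by
        rw [← integral_sub_left_eq_self (fun z => multiplierKernel g z * f (x - z)) volume x]
        simp only [sub_sub_cancel]

end MultiplierKernel

section DyadicDecomposition

variable {n : ℕ} {j : ℕ} {ξ : En n}

/-- The closed region `2^(j-1) ≤ ⟨ξ⟩ ≤ 2^(j+2)` of frequencies. -/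
def dyadicShell (n j : ℕ) : Set (En n) :=
  {ξ | √(1 + ‖ξ‖ ^ 2) ∈ Set.Icc (2 ^ j / 2) (4 * 2 ^ j)}

lemma isClosed_dyadicShell : IsClosed (dyadicShell n j) :=
  isClosed_Icc.preimage (f := fun ξ : En n => √(1 + ‖ξ‖ ^ 2)) (by fun_prop)

lemma dyadicShell_subset_closedBall : dyadicShell n j ⊆ Metric.closedBall 0 (4 * 2 ^ j) :=
  fun _ hξ => mem_closedBall_zero_iff.2 <|
    (Real.le_sqrt_of_sq_le (le_add_of_nonneg_left zero_le_one)).trans hξ.2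

lemma volume_dyadicShell_le : volume (dyadicShell n j) ≤
    2 ^ (j * n) * volume (Metric.closedBall (0 : En n) 4) := by
  calc volume (dyadicShell n j) ≤ volume (Metric.closedBall (0 : En n) (2 ^ j * 4)) := by
        rw [mul_comm]
        exact measure_mono dyadicShell_subset_closedBall
    _ = 2 ^ (j * n) * volume (Metric.closedBall (0 : En n) 4) := by
        rw [Measure.addHaar_closedBall_mul_of_pos _ _ (by positivity), finrank_euclideanSpace_fin,
          ENNReal.ofReal_pow (by positivity), ENNReal.ofReal_pow zero_le_two, ENNReal.ofReal_ofNat,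
          pow_mul]

lemma isFiniteMeasure_restrict_dyadicShell :
    IsFiniteMeasure (volume.restrict (dyadicShell n j)) :=
  isFiniteMeasure_restrict.2 <| ne_top_of_le_ne_top measure_closedBall_lt_top.ne
    (measure_mono dyadicShell_subset_closedBall)

lemma jb_le_of_mem_dyadicShell (hξ : ξ ∈ dyadicShell n j) (t : ℝ) :
    jb ξ t ≤ 4 ^ |t| * 2 ^ (j * t) := by
  set u := √(1 + ‖ξ‖ ^ 2) with hu
  obtain ⟨hlower, hupper⟩ : 2 ^ j / 2 ≤ u ∧ u ≤ 4 * 2 ^ j := hξ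
  have hu0 : 0 < u := lt_of_lt_of_le (by positivity) hlower
  have hjb : jb ξ t = (u / 2 ^ j) ^ t * 2 ^ (j * t) := by
    rw [Real.rpow_mul zero_le_two, Real.rpow_natCast, ← Real.mul_rpow (by positivity)
      (by positivity), div_mul_cancel₀ _ (by positivity), hu, Real.sqrt_eq_rpow,
      ← Real.rpow_mul (by positivity), one_div_mul_eq_div, jb]
  rw [hjb]
  gcongr
  rcases le_total 0 t with ht | ht
  · rw [abs_of_nonneg ht]
    gcongr
    rwa [div_le_iff₀ (by positivity)]
  · rw [abs_of_nonpos ht, ← inv_inv (u / 2 ^ j), Real.inv_rpow (by positivity),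
      ← Real.rpow_neg (by positivity)]
    refine Real.rpow_le_rpow (by positivity) ?_ (neg_nonneg.2 ht)
    rw [inv_div, div_le_iff₀ hu0]
    linarith

/-- A smooth cutoff, equal to `1` on the unit ball and vanishing outside the ball of radius `2`. -/
def unitCutoff (ξ : En n) : ℂ :=
  ofReal ((⟨1, 2, one_pos, one_lt_two⟩ : ContDiffBump (0 : En n)) ξ)

lemma contDiff_unitCutoff : ContDiff ℝ (⊤ : ℕ∞) (unitCutoff (n := n)) :=
  ofRealCLM.contDiff.comp (ContDiffBump.contDiff _)

lemma hasCompactSupport_unitCutoff : HasCompactSupport (unitCutoff (n := n)) :=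
  (ContDiffBump.hasCompactSupport _).comp_left (g := ofReal) ofReal_zero

lemma norm_unitCutoff_le_one : ‖unitCutoff ξ‖ ≤ 1 := by
  rw [unitCutoff, norm_real, Real.norm_of_nonneg (ContDiffBump.nonneg _)]
  exact ContDiffBump.le_one _

/-- The cutoff to the frequencies `|ξ| ≲ 2^j`. -/
def dyadicCutoff (j : ℕ) (ξ : En n) : ℂ :=
  unitCutoff (((2 : ℝ) ^ j)⁻¹ • ξ)

lemma contDiff_dyadicCutoff : ContDiff ℝ (⊤ : ℕ∞) (dyadicCutoff (n := n) j) :=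
  contDiff_unitCutoff.comp (contDiff_const_smul _)

lemma dyadicCutoff_eq_one (hξ : ‖ξ‖ ≤ 2 ^ j) : dyadicCutoff j ξ = 1 := by
  rw [dyadicCutoff, unitCutoff, ContDiffBump.one_of_mem_closedBall, ofReal_one]
  rw [mem_closedBall_zero_iff, norm_smul, norm_inv, norm_pow, Real.norm_ofNat, inv_mul_eq_div]
  exact div_le_one_of_le₀ hξ (by positivity)

lemma dyadicCutoff_eq_zero (hξ : 2 * 2 ^ j ≤ ‖ξ‖) : dyadicCutoff j ξ = 0 := by
  rw [dyadicCutoff, unitCutoff, ContDiffBump.zero_of_le_dist, ofReal_zero]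
  rwa [dist_zero_right, norm_smul, norm_inv, norm_pow, Real.norm_ofNat, inv_mul_eq_div,
    le_div_iff₀ (by positivity)]

lemma pow_mul_enorm_iterate_pd_dyadicCutoff (i : Fin n) (k : ℕ) :
    ((2 : ℝ≥0∞) ^ j) ^ k * ‖(pd i)^[k] (dyadicCutoff j) ξ‖ₑ =
      ‖(pd i)^[k] unitCutoff (((2 : ℝ) ^ j)⁻¹ • ξ)‖ₑ := by
  have hscale : ‖(((2 : ℝ) ^ j) ^ k)‖ₑ = ((2 : ℝ≥0∞) ^ j) ^ k := by
    rw [enorm_pow, enorm_pow, Real.enorm_eq_ofReal zero_le_two, ENNReal.ofReal_ofNat]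
  rw [← hscale, ← enorm_smul, show dyadicCutoff j = fun ξ : En n => unitCutoff (((2 : ℝ) ^ j)⁻¹ • ξ)
    from rfl, iterate_pd_comp_smul_apply i contDiff_unitCutoff, smul_smul, ← mul_pow,
    mul_inv_cancel₀ (by positivity), one_pow, one_smul]

/-- The pieces of the Littlewood–Paley partition of unity of frequency space. -/
def littlewoodPaley : ℕ → En n → ℂ
  | 0 => dyadicCutoff 0
  | j + 1 => dyadicCutoff (j + 1) - dyadicCutoff j

lemma contDiff_littlewoodPaley : ContDiff ℝ (⊤ : ℕ∞) (littlewoodPaley (n := n) j) := by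
  cases j with
  | zero => exact contDiff_dyadicCutoff
  | succ j => exact contDiff_dyadicCutoff.sub contDiff_dyadicCutoff

lemma sum_range_succ_littlewoodPaley (J : ℕ) :
    ∑ j ∈ Finset.range (J + 1), littlewoodPaley j ξ = dyadicCutoff J ξ := by
  induction J with
  | zero => simp [littlewoodPaley]
  | succ J ih =>
    rw [Finset.sum_range_succ, ih, littlewoodPaley, Pi.sub_apply, add_sub_cancel]

lemma norm_sum_range_littlewoodPaley_le_one (J : ℕ) :
    ‖∑ j ∈ Finset.range J, littlewoodPaley j ξ‖ ≤ 1 := by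
  cases J with
  | zero => simp
  | succ J =>
    rw [sum_range_succ_littlewoodPaley]
    exact norm_unitCutoff_le_one

lemma tendsto_sum_range_littlewoodPaley (ξ : En n) :
    Filter.Tendsto (fun J => ∑ j ∈ Finset.range J, littlewoodPaley j ξ) Filter.atTop (nhds 1) := by
  rw [← Filter.tendsto_add_atTop_iff_nat 1]
  simp_rw [sum_range_succ_littlewoodPaley]
  obtain ⟨J, hJ⟩ := pow_unbounded_of_one_lt ‖ξ‖ one_lt_two
  refine tendsto_const_nhds.congr' ?_
  filter_upwards [Filter.eventually_ge_atTop J] with j hj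
  exact (dyadicCutoff_eq_one (hJ.le.trans (pow_le_pow_right₀ one_le_two hj))).symm

lemma norm_littlewoodPaley_le_two : ‖littlewoodPaley j ξ‖ ≤ 2 := by
  cases j with
  | zero => exact norm_unitCutoff_le_one.trans one_le_two
  | succ j =>
    refine (norm_sub_le _ _).trans ?_
    rw [← one_add_one_eq_two]
    exact add_le_add norm_unitCutoff_le_one norm_unitCutoff_le_one

lemma mem_dyadicShell_of_littlewoodPaley_ne_zero (hξ : littlewoodPaley j ξ ≠ 0) :
    ξ ∈ dyadicShell n j := by
  have hupper : ‖ξ‖ < 2 * 2 ^ j := by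
    contrapose! hξ
    cases j with
    | zero => exact dyadicCutoff_eq_zero hξ
    | succ j =>
      rw [littlewoodPaley, Pi.sub_apply, dyadicCutoff_eq_zero hξ, dyadicCutoff_eq_zero, sub_zero]
      exact le_trans (by gcongr <;> simp) hξ
  have hlower : 2 ^ j / 2 ≤ √(1 + ‖ξ‖ ^ 2) := by
    apply Real.le_sqrt_of_sq_le
    cases j with
    | zero => nlinarith [sq_nonneg ‖ξ‖]
    | succ j =>
      have hj : 2 ^ j ≤ ‖ξ‖ := by
        contrapose! hξ
        rw [littlewoodPaley, Pi.sub_apply, dyadicCutoff_eq_one hξ.le, dyadicCutoff_eq_one, sub_self]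
        exact hξ.le.trans (by gcongr <;> simp)
      rw [pow_succ 2 j, mul_div_cancel_right₀ _ two_ne_zero]
      linarith [pow_le_pow_left₀ (by positivity) hj 2]
  refine ⟨hlower, Real.sqrt_le_iff.2 ⟨by positivity, ?_⟩⟩
  have hone : (1 : ℝ) ≤ 2 ^ j := one_le_pow₀ one_le_two
  nlinarith [norm_nonneg ξ]

lemma tsupport_littlewoodPaley_subset : tsupport (littlewoodPaley j) ⊆ dyadicShell n j :=
  closure_minimal (fun _ => mem_dyadicShell_of_littlewoodPaley_ne_zero) isClosed_dyadicShell

lemma exists_enorm_iterate_pd_unitCutoff_le (n N : ℕ) :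
    ∃ D : ℝ≥0, ∀ (i : Fin n), ∀ k ≤ N, ∀ ξ, ‖(pd i)^[k] unitCutoff ξ‖ₑ ≤ D := by
  have hbound : ∀ ik : Fin n × Fin (N + 1), ∃ D : ℝ≥0, ∀ ξ : En n,
      ‖(pd ik.1)^[ik.2] unitCutoff ξ‖ₑ ≤ D := fun ⟨i, k⟩ => by
    obtain ⟨D, hD⟩ := (hasCompactSupport_iterate_pd i hasCompactSupport_unitCutoff
      k).exists_bound_of_continuous (contDiff_iterate_pd i contDiff_unitCutoff k).continuous
    exact ⟨D.toNNReal, fun ξ => by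
      rw [← ofReal_norm]
      exact ENNReal.ofReal_le_ofReal (hD ξ)⟩
  choose D hD using hbound
  obtain ⟨Dmax, hDmax⟩ := Finite.exists_le D
  exact ⟨Dmax, fun i k hk ξ => (hD (i, ⟨k, Nat.lt_succ_of_le hk⟩) ξ).trans
    (ENNReal.coe_le_coe.2 (hDmax _))⟩

lemma exists_pow_mul_enorm_iterate_pd_littlewoodPaley_le (n N : ℕ) :
    ∃ D : ℝ≥0, ∀ (i : Fin n), ∀ k ≤ N, ∀ (j : ℕ) (R : ℝ≥0), R ≤ 2 ^ j →
      ∀ ξ, (R : ℝ≥0∞) ^ k * ‖(pd i)^[k] (littlewoodPaley j) ξ‖ₑ ≤ D := by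
  obtain ⟨D, hD⟩ := exists_enorm_iterate_pd_unitCutoff_le n N
  have hcutoff : ∀ (i : Fin n), ∀ k ≤ N, ∀ (j : ℕ) (c R : ℝ≥0∞), R ≤ c * 2 ^ j →
      ∀ ξ, R ^ k * ‖(pd i)^[k] (dyadicCutoff j) ξ‖ₑ ≤ c ^ k * D := fun i k hk j c R hR ξ => by
    calc R ^ k * ‖(pd i)^[k] (dyadicCutoff j) ξ‖ₑ
        ≤ c ^ k * ((2 ^ j) ^ k * ‖(pd i)^[k] (dyadicCutoff j) ξ‖ₑ) := by
          rw [← mul_assoc, ← mul_pow]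
          gcongr
      _ ≤ c ^ k * D := by
          rw [pow_mul_enorm_iterate_pd_dyadicCutoff]
          gcongr
          exact hD i k hk _
  refine ⟨D + 2 ^ N * D, fun i k hk j R hR ξ => ?_⟩
  have hR' : (R : ℝ≥0∞) ≤ 2 ^ j := by exact_mod_cast hR
  have hsmall := hcutoff i k hk j 1 R (by rwa [one_mul]) ξ
  rw [one_pow, one_mul] at hsmall
  push_cast
  cases j with
  | zero => exact hsmall.trans le_self_add
  | succ j =>
    rw [littlewoodPaley, iterate_pd_sub_apply i contDiff_dyadicCutoff contDiff_dyadicCutoff]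
    refine (mul_le_mul_right enorm_sub_le _).trans ?_
    rw [mul_add]
    refine add_le_add hsmall ?_
    refine (hcutoff i k hk j 2 R (by rwa [← pow_succ']) ξ).trans ?_
    gcongr
    exact one_le_two

end DyadicDecomposition

section PolynomialWeight

variable {n : ℕ} {N : ℕ} {R : ℝ≥0} {s s' : ℝ≥0∞}

/-- The weight `1 + ∑ᵢ |R zᵢ| ^ N`, comparable with `(1 + R|z|) ^ N`. Multiplying a kernel by it
amounts to differentiating the symbol, up to the powers of `R`. -/
def polyWeight (N : ℕ) (R : ℝ≥0) (z : En n) : ℝ≥0∞ :=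
  1 + ∑ i, (R * ‖z i‖ₑ) ^ N

lemma one_le_polyWeight (z : En n) : 1 ≤ polyWeight N R z :=
  le_self_add

lemma polyWeight_ne_top (z : En n) : polyWeight N R z ≠ ⊤ :=
  ENNReal.add_ne_top.2 ⟨ENNReal.one_ne_top, ENNReal.sum_ne_top.2 fun i _ => by finiteness⟩

lemma measurable_polyWeight : Measurable (polyWeight (n := n) N R) := by
  unfold polyWeight
  fun_prop

lemma polyWeight_eq_one_smul (z : En n) : polyWeight N R z = polyWeight N 1 ((R : ℝ) • z) := by
  simp [polyWeight, enorm_mul, Real.enorm_of_nonneg]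

lemma norm_le_sum_abs (z : En n) : ‖z‖ ≤ ∑ i, |z i| := by
  calc ‖z‖ = ‖∑ i, z i • EuclideanSpace.basisFun (Fin n) ℝ i‖ := by
        congr 1
        simpa using ((EuclideanSpace.basisFun (Fin n) ℝ).sum_repr z).symm
    _ ≤ ∑ i, ‖z i • EuclideanSpace.basisFun (Fin n) ℝ i‖ := norm_sum_le _ _
    _ = ∑ i, |z i| := by simp [norm_smul]

lemma one_add_norm_pow_le_polyWeight (N : ℕ) (z : En n) :
    ENNReal.ofReal ((1 + ‖z‖) ^ N) ≤ (n + 1) ^ N * polyWeight N 1 z := by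
  have hsum : (1 + ∑ i, |z i|) ^ N ≤ (n + 1 : ℝ) ^ N * (1 + ∑ i, |z i| ^ N) := by
    rcases N with _ | M
    · simp
    have hmean := pow_sum_le_card_mul_sum_pow (s := Finset.univ)
      (f := fun i : Option (Fin n) => i.elim 1 fun i => |z i|) (by rintro (_ | i) <;> simp) M
    simp only [Fintype.sum_option, Option.elim_none, Option.elim_some, Finset.card_univ,
      Fintype.card_option, Fintype.card_fin, Nat.cast_add, Nat.cast_one, one_pow] at hmean
    refine hmean.trans ?_
    gcongr
    · simp
    · simp
  have hweight : polyWeight N 1 z = ENNReal.ofReal (1 + ∑ i, |z i| ^ N) := by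
    rw [ENNReal.ofReal_add zero_le_one (by positivity),
      ENNReal.ofReal_sum_of_nonneg fun i _ => by positivity]
    simp [polyWeight, ENNReal.ofReal_pow, Real.enorm_eq_ofReal_abs]
  rw [hweight, show ((n : ℝ≥0∞) + 1) ^ N = ENNReal.ofReal ((n + 1) ^ N) by
    rw [ENNReal.ofReal_pow (by positivity), ENNReal.ofReal_add (by positivity) zero_le_one]; simp,
    ← ENNReal.ofReal_mul (by positivity)]
  refine ENNReal.ofReal_le_ofReal (le_trans ?_ hsum)
  gcongr
  exact norm_le_sum_abs z

lemma eLpNorm_inv_polyWeight_one_ne_top (hN : n < N) (hs : 1 ≤ s) (hst : s ≠ ⊤) :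
    eLpNorm (fun z : En n => (polyWeight N 1 z)⁻¹) s volume ≠ ⊤ := by
  have hbracket : ∀ z : En n, (polyWeight N 1 z)⁻¹ ^ s.toReal ≤
      (n + 1) ^ N * ENNReal.ofReal ((1 + ‖z‖) ^ (-(N : ℝ))) := fun z => by
    calc (polyWeight N 1 z)⁻¹ ^ s.toReal ≤ (polyWeight N 1 z)⁻¹ := by
          refine (ENNReal.rpow_le_rpow_of_exponent_ge
            (ENNReal.inv_le_one.2 (one_le_polyWeight z)) ?_).trans_eq (ENNReal.rpow_one _)
          simpa using ENNReal.toReal_mono hst hs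
      _ ≤ (n + 1) ^ N * (ENNReal.ofReal ((1 + ‖z‖) ^ N))⁻¹ := by
          rw [← div_eq_mul_inv, ENNReal.le_div_iff_mul_le (.inl (by positivity))
            (.inl (by finiteness)), mul_comm, ← div_eq_mul_inv]
          exact ENNReal.div_le_of_le_mul (one_add_norm_pow_le_polyWeight N z)
      _ = _ := by
          rw [Real.rpow_neg (by positivity), Real.rpow_natCast,
            ENNReal.ofReal_inv_of_pos (by positivity)]
  have hfin := finite_integral_one_add_norm (E := En n) (μ := volume) (r := N) (by simpa using hN)
  rw [eLpNorm_eq_lintegral_rpow_enorm_toReal (zero_lt_one.trans_le hs).ne' hst]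
  refine ENNReal.rpow_ne_top_of_nonneg (by positivity) (ne_top_of_le_ne_top ?_
    (lintegral_mono hbracket))
  rw [lintegral_const_mul' _ _ (by finiteness)]
  exact ENNReal.mul_ne_top (by finiteness) hfin.ne

lemma exists_eLpNorm_inv_polyWeight_le (hN : n < N) (hs : 1 ≤ s) (hst : s ≠ ⊤) :
    ∃ C : ℝ≥0, ∀ R : ℝ≥0, R ≠ 0 → eLpNorm (fun z : En n => (polyWeight N R z)⁻¹) s volume ≤
      C * (R : ℝ≥0∞) ^ (-(n * s⁻¹.toReal)) := by
  refine ⟨(eLpNorm (fun z : En n => (polyWeight N 1 z)⁻¹) s volume).toNNReal, fun R hR => ?_⟩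
  rw [ENNReal.coe_toNNReal (eLpNorm_inv_polyWeight_one_ne_top hN hs hst)]
  simp_rw [polyWeight_eq_one_smul (R := R)]
  rw [eLpNorm_comp_smul volume (by simpa using hR) fun z : En n => (polyWeight N 1 z)⁻¹, mul_comm]
  gcongr
  rw [finrank_euclideanSpace_fin, abs_of_nonneg (by positivity),
    ENNReal.ofReal_inv_of_pos (by positivity), ENNReal.ofReal_pow (by positivity),
    ENNReal.ofReal_coe_nnreal, ENNReal.inv_rpow, ← ENNReal.rpow_natCast, ← ENNReal.rpow_mul,
    ENNReal.rpow_neg]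

lemma polyWeight_mul_enorm_multiplierKernel {g : En n → ℂ} (hg : ContDiff ℝ (⊤ : ℕ∞) g)
    (hc : HasCompactSupport g) (z : En n) :
    polyWeight N R z * ‖multiplierKernel g z‖ₑ = ‖multiplierKernel g z‖ₑ +
      ∑ i, (R ^ N : ℝ≥0) * ‖multiplierKernel ((pd i)^[N] g) z‖ₑ := by
  have hpd : ∀ i, ‖multiplierKernel ((pd i)^[N] g) z‖ₑ =
      ‖z i‖ₑ ^ N * ‖multiplierKernel g z‖ₑ := fun i => by
    rw [← ofReal_norm, norm_multiplierKernel_iterate_pd i hg hc N z,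
      ENNReal.ofReal_mul (by positivity), ENNReal.ofReal_pow (abs_nonneg _), ofReal_norm,
      Real.enorm_eq_ofReal_abs]
  simp only [polyWeight, hpd, add_mul, one_mul, Finset.sum_mul, mul_pow, ENNReal.coe_pow,
    mul_assoc]

lemma exists_eLpNorm_polyWeight_mul_multiplierKernel_le (n N : ℕ) [ENNReal.HolderConjugate s s']
    (hs2 : s ≤ 2) :
    ∃ K : ℝ≥0, ∀ (R : ℝ≥0) (g : En n → ℂ), ContDiff ℝ (⊤ : ℕ∞) g → HasCompactSupport g →
      eLpNorm (fun z => polyWeight N R z * ‖multiplierKernel g z‖ₑ) s' volume ≤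
        K * (eLpNorm g s volume + ∑ i, R ^ N * eLpNorm ((pd i)^[N] g) s volume) := by
  obtain ⟨K, hK⟩ := exists_eLpNorm_multiplierKernel_le (En n) (s := s) (s' := s') hs2
  refine ⟨K, fun R g hg hc => ?_⟩
  have hs' : 1 ≤ s' := ENNReal.HolderConjugate.one_le s' s
  have hint : Integrable g := hg.continuous.integrable_of_hasCompactSupport hc
  have hintN : ∀ i, Integrable ((pd i)^[N] g) := fun i =>
    (contDiff_iterate_pd i hg N).continuous.integrable_of_hasCompactSupport
      (hasCompactSupport_iterate_pd i hc N)
  have hmeas : ∀ {h : En n → ℂ}, Integrable h → AEMeasurable (fun z => ‖multiplierKernel h z‖ₑ) :=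
    fun hh => (continuous_multiplierKernel hh).enorm.measurable.aemeasurable
  simp_rw [polyWeight_mul_enorm_multiplierKernel hg hc]
  refine (eLpNorm_add_le (hmeas hint).aestronglyMeasurable (Finset.aemeasurable_fun_sum _
    fun i _ => (hmeas (hintN i)).const_mul _).aestronglyMeasurable hs').trans ?_
  rw [mul_add, Finset.mul_sum]
  gcongr
  · rw [eLpNorm_enorm]
    exact hK g hint
  refine (eLpNorm_sum_const_mul_le _ _ (fun i => hmeas (hintN i)) hs').trans ?_
  refine Finset.sum_le_sum fun i _ => ?_
  rw [eLpNorm_enorm, mul_left_comm (K : ℝ≥0∞), ENNReal.coe_pow]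
  refine mul_le_mul_right ?_ _
  exact hK _ (hintN i)

lemma enorm_integral_exp_mul_ft_le [ENNReal.HolderConjugate s s'] {g f : En n → ℂ}
    (hg : Integrable g) (hf : Integrable f) {w : En n → ℝ≥0∞} (hw : Measurable w)
    (hw0 : ∀ z, w z ≠ 0) (hwt : ∀ z, w z ≠ ⊤) (x : En n) :
    ‖∫ ξ, exp (I * ofReal ⟪x, ξ⟫) * g ξ * ft f ξ‖ₑ ≤
      eLpNorm (fun z => w z * ‖multiplierKernel g z‖ₑ) s' volume *
        eLpNorm (fun z => (w z)⁻¹ * ‖f (x - z)‖ₑ) s volume := by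
  have hsplit : ∀ z, ‖multiplierKernel g z * f (x - z)‖ₑ =
      (w z * ‖multiplierKernel g z‖ₑ) * ((w z)⁻¹ * ‖f (x - z)‖ₑ) := fun z => by
    rw [mul_mul_mul_comm, ENNReal.mul_inv_cancel (hw0 z) (hwt z), one_mul, enorm_mul]
  have hkernel : Measurable fun z => w z * ‖multiplierKernel g z‖ₑ :=
    hw.mul (continuous_multiplierKernel hg).enorm.measurable
  have htranslate : AEMeasurable fun z => (w z)⁻¹ * ‖f (x - z)‖ₑ :=
    hw.inv.aemeasurable.mul (hf.comp_sub_left x).aestronglyMeasurable.enorm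
  calc ‖∫ ξ, exp (I * ofReal ⟪x, ξ⟫) * g ξ * ft f ξ‖ₑ
      ≤ ∫⁻ z, (w z * ‖multiplierKernel g z‖ₑ) * ((w z)⁻¹ * ‖f (x - z)‖ₑ) := by
        rw [integral_exp_mul_ft_eq hg hf]
        exact (enorm_integral_le_lintegral_enorm _).trans_eq (lintegral_congr hsplit)
    _ = eLpNorm (fun z => (w z * ‖multiplierKernel g z‖ₑ) * ((w z)⁻¹ * ‖f (x - z)‖ₑ)) 1 volume :=
        by simp only [eLpNorm_one_eq_lintegral_enorm, enorm_eq_self]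
    _ ≤ _ := eLpNorm_mul_le_of_holderTriple hkernel.aemeasurable htranslate s' s 1

end PolynomialWeight

section ScaledSobolevNorm

variable {n N : ℕ} {s : ℝ≥0∞} {R : ℝ≥0} {S : Set (En n)} {b ψ : En n → ℂ}

/-- The Sobolev norm of order `N` over `L^s(S)` in which every derivative carries a factor `R`. -/
def scaledSobolevNorm (N : ℕ) (s : ℝ≥0∞) (R : ℝ≥0) (S : Set (En n)) (b : En n → ℂ) : ℝ≥0∞ :=
  ∑ α ∈ multiIdx n N, (R ^ mdeg α : ℝ≥0) * eLpNorm (mderiv α b) s (volume.restrict S)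

lemma mem_multiIdx {α : Fin n → ℕ} : α ∈ multiIdx n N ↔ mdeg α ≤ N := by
  simp only [multiIdx, Finset.mem_filter, Fintype.mem_piFinset, Finset.mem_range_succ_iff,
    and_iff_right_iff_imp]
  exact fun hα i => (Finset.single_le_sum (fun i _ => zero_le) (Finset.mem_univ i)).trans hα

lemma eLpNorm_restrict_le_scaledSobolevNorm :
    eLpNorm b s (volume.restrict S) ≤ scaledSobolevNorm N s R S b := by
  have hzero : (0 : Fin n → ℕ) ∈ multiIdx n N := mem_multiIdx.2 (by simp [mdeg])
  simpa [scaledSobolevNorm, mderiv_zero, mdeg] using Finset.single_le_sum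
    (f := fun α => ((R ^ mdeg α : ℝ≥0) : ℝ≥0∞) * eLpNorm (mderiv α b) s (volume.restrict S))
    (fun _ _ => zero_le) hzero

lemma sum_pow_mul_eLpNorm_iterate_pd_le_scaledSobolevNorm (i : Fin n) :
    ∑ k ∈ Finset.range (N + 1), (R ^ k : ℝ≥0) * eLpNorm ((pd i)^[k] b) s (volume.restrict S) ≤
      scaledSobolevNorm N s R S b := by
  have hsub : (Finset.range (N + 1)).image (fun k => (Pi.single i k : Fin n → ℕ)) ⊆
      multiIdx n N := Finset.image_subset_iff.2 fun k hk =>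
    mem_multiIdx.2 ((mdeg_single i k).trans_le (Finset.mem_range_succ_iff.1 hk))
  refine le_of_eq_of_le ?_ (Finset.sum_le_sum_of_subset hsub)
  rw [Finset.sum_image (Pi.single_injective i).injOn]
  simp_rw [mdeg_single, mderiv_single]

lemma eLpNorm_mul_le_scaledSobolevNorm {D : ℝ≥0} (hψS : tsupport ψ ⊆ S)
    (hD : ∀ ξ, ‖ψ ξ‖ₑ ≤ D) :
    eLpNorm (ψ * b) s volume ≤ D * scaledSobolevNorm N s R S b := by
  have hsupp : Function.support (ψ * b) ⊆ S :=
    (Function.support_mul_subset_left ψ b).trans ((subset_tsupport ψ).trans hψS)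
  rw [← eLpNorm_restrict_eq_of_support_subset hsupp]
  calc eLpNorm (ψ * b) s (volume.restrict S)
      ≤ D * eLpNorm b s (volume.restrict S) :=
        eLpNorm_le_nnreal_smul_eLpNorm_of_ae_le_mul (.of_forall fun ξ => by
          rw [Pi.mul_apply, nnnorm_mul]
          exact mul_le_mul_left (ENNReal.coe_le_coe.1 (hD ξ)) _) s
    _ ≤ D * scaledSobolevNorm N s R S b := by
        gcongr
        exact eLpNorm_restrict_le_scaledSobolevNorm

lemma pow_mul_eLpNorm_iterate_pd_mul_le_scaledSobolevNorm (i : Fin n) (hs : 1 ≤ s)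
    (hψ : ContDiff ℝ (⊤ : ℕ∞) ψ) (hψS : tsupport ψ ⊆ S) (hb : ContDiff ℝ (⊤ : ℕ∞) b) {D : ℝ≥0}
    (hD : ∀ k ≤ N, ∀ ξ, (R : ℝ≥0∞) ^ k * ‖(pd i)^[k] ψ ξ‖ₑ ≤ D) :
    R ^ N * eLpNorm ((pd i)^[N] (ψ * b)) s volume ≤
      2 ^ N * D * scaledSobolevNorm N s R S b := by
  have hsupp : Function.support ((pd i)^[N] (ψ * b)) ⊆ S := (subset_tsupport _).trans <|
    (tsupport_iterate_pd_subset i _ N).trans ((tsupport_mul_subset_left).trans hψS)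
  have hR : (R : ℝ≥0∞) ^ N = ‖((R ^ N : ℝ≥0) : ℝ)‖ₑ := by
    rw [Real.enorm_of_nonneg (by positivity), ENNReal.ofReal_coe_nnreal, ENNReal.coe_pow]
  rw [← eLpNorm_restrict_eq_of_support_subset hsupp, hR, ← eLpNorm_const_smul]
  calc eLpNorm (((R ^ N : ℝ≥0) : ℝ) • (pd i)^[N] (ψ * b)) s (volume.restrict S)
      ≤ eLpNorm (fun ξ => ∑ k ∈ Finset.range (N + 1),
          (2 ^ N * D * R ^ k : ℝ≥0) * ‖(pd i)^[k] b ξ‖ₑ) s (volume.restrict S) := by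
        refine eLpNorm_mono_enorm fun ξ => ?_
        rw [Pi.smul_apply, enorm_smul, ← hR, enorm_eq_self]
        refine (pow_mul_enorm_iterate_pd_mul_le i hψ hb fun k hk => hD k hk ξ).trans_eq ?_
        rw [Finset.mul_sum]
        push_cast
        simp_rw [mul_assoc]
    _ ≤ ∑ k ∈ Finset.range (N + 1), (2 ^ N * D * R ^ k : ℝ≥0) *
          eLpNorm (fun ξ => ‖(pd i)^[k] b ξ‖ₑ) s (volume.restrict S) :=
        eLpNorm_sum_const_mul_le _ _ (fun k =>
          (contDiff_iterate_pd i hb k).continuous.enorm.measurable.aemeasurable) hs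
    _ = 2 ^ N * D * ∑ k ∈ Finset.range (N + 1),
          (R ^ k : ℝ≥0) * eLpNorm ((pd i)^[k] b) s (volume.restrict S) := by
        rw [Finset.mul_sum]
        push_cast
        simp_rw [eLpNorm_enorm, mul_assoc]
    _ ≤ 2 ^ N * D * scaledSobolevNorm N s R S b := by
        gcongr
        exact sum_pow_mul_eLpNorm_iterate_pd_le_scaledSobolevNorm i

end ScaledSobolevNorm

section Amplitude

variable {n : ℕ} {s s' p : ℝ≥0∞} {m ρ : ℝ} {a : En n → En n → ℂ}

lemma exists_enorm_integral_littlewoodPaley_le (n N : ℕ) [ENNReal.HolderConjugate s s']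
    (hs2 : s ≤ 2) :
    ∃ C : ℝ≥0, ∀ (j : ℕ) (R : ℝ≥0), R ≤ 2 ^ j → ∀ (b f : En n → ℂ), ContDiff ℝ (⊤ : ℕ∞) b →
      Integrable f → ∀ x, ‖∫ ξ, exp (I * ofReal ⟪x, ξ⟫) * (littlewoodPaley j ξ * b ξ) * ft f ξ‖ₑ ≤
        C * scaledSobolevNorm N s R (dyadicShell n j) b *
          eLpNorm (fun z => (polyWeight N R z)⁻¹ * ‖f (x - z)‖ₑ) s volume := by
  obtain ⟨K, hK⟩ := exists_eLpNorm_polyWeight_mul_multiplierKernel_le n N (s := s) (s' := s') hs2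
  obtain ⟨D, hD⟩ := exists_pow_mul_enorm_iterate_pd_littlewoodPaley_le n N
  have hs : 1 ≤ s := ENNReal.HolderConjugate.one_le s s'
  refine ⟨K * (2 + n * (2 ^ N * D)), fun j R hR b f hb hf x => ?_⟩
  set B := scaledSobolevNorm N s R (dyadicShell n j) b
  have hg : ContDiff ℝ (⊤ : ℕ∞) (littlewoodPaley j * b) := contDiff_littlewoodPaley.mul hb
  have hgc : HasCompactSupport (littlewoodPaley j * b) :=
    (HasCompactSupport.of_support_subset_isCompact (isCompact_closedBall 0 (4 * 2 ^ j))
      ((subset_tsupport _).trans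
        (tsupport_littlewoodPaley_subset.trans dyadicShell_subset_closedBall))).mul_right
  refine (enorm_integral_exp_mul_ft_le (hg.continuous.integrable_of_hasCompactSupport hgc) hf
    (measurable_polyWeight (N := N) (R := R)) (fun z => (zero_lt_one.trans_le
      (one_le_polyWeight z)).ne') polyWeight_ne_top x (s := s) (s' := s')).trans ?_
  gcongr
  refine (hK R _ hg hgc).trans ?_
  have hbase : eLpNorm (littlewoodPaley j * b) s volume ≤ 2 * B :=
    eLpNorm_mul_le_scaledSobolevNorm tsupport_littlewoodPaley_subset fun ξ =>
      enorm_le_coe.2 norm_littlewoodPaley_le_two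
  have hderiv : ∀ i, R ^ N * eLpNorm ((pd i)^[N] (littlewoodPaley j * b)) s volume ≤
      2 ^ N * D * B := fun i =>
    pow_mul_eLpNorm_iterate_pd_mul_le_scaledSobolevNorm i hs contDiff_littlewoodPaley
      tsupport_littlewoodPaley_subset hb fun k hk => hD i k hk j R hR
  calc (K : ℝ≥0∞) * (eLpNorm (littlewoodPaley j * b) s volume +
        ∑ i, R ^ N * eLpNorm ((pd i)^[N] (littlewoodPaley j * b)) s volume)
      ≤ K * (2 * B + ∑ _i : Fin n, 2 ^ N * D * B) := by
        gcongr K * (?_ + ∑ i, ?_) with i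
        exact hderiv i
    _ = _ := by
        rw [Finset.sum_const, Finset.card_univ, Fintype.card_fin, nsmul_eq_mul]
        push_cast
        ring

lemma LpSm.contDiff_mderiv (ha : LpSm p m ρ a) (α : Fin n → ℕ) (x : En n) :
    ContDiff ℝ (⊤ : ℕ∞) (mderiv α (a x)) := by
  unfold mderiv
  induction List.finRange n with
  | nil => exact ha.1 x
  | cons i l ih => exact contDiff_iterate_pd i ih (α i)

lemma LpSm.aemeasurable_eLpNorm_mderiv (ha : LpSm p m ρ a) (hst : s ≠ ⊤) (α : Fin n → ℕ)
    (S : Set (En n)) :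
    AEMeasurable (fun x => eLpNorm (mderiv α (a x)) s (volume.restrict S)) :=
  aemeasurable_eLpNorm_of_continuous (fun x => (ha.contDiff_mderiv α x).continuous) (ha.2.1 α) hst

lemma LpSm.exists_eLpNorm_eLpNorm_mderiv_le (ha : LpSm p m ρ a) (hsp : s ≤ p) (α : Fin n → ℕ) :
    ∃ C : ℝ≥0, ∀ j : ℕ,
      eLpNorm (fun x => eLpNorm (mderiv α (a x)) s (volume.restrict (dyadicShell n j))) p volume ≤
        C * 2 ^ (j * (n * s⁻¹.toReal + (m - ρ * mdeg α))) := by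
  obtain ⟨C, hC⟩ := ha.2.2 α
  set t := m - ρ * mdeg α
  set σ := s⁻¹.toReal
  have hσ : 0 ≤ σ := ENNReal.toReal_nonneg
  have hball : volume (Metric.closedBall (0 : En n) 4) ≠ ⊤ := measure_closedBall_lt_top.ne
  refine ⟨(volume (Metric.closedBall (0 : En n) 4)).toNNReal ^ σ * (|C| * 4 ^ |t|).toNNReal,
    fun j => ?_⟩
  have hfinite : IsFiniteMeasure (volume.restrict (dyadicShell n j)) :=
    isFiniteMeasure_restrict_dyadicShell
  have hsymbol : ∀ ξ ∈ dyadicShell n j, eLpNorm (fun x => mderiv α (a x) ξ) p volume ≤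
      ENNReal.ofReal (|C| * 4 ^ |t|) * 2 ^ (j * t) := fun ξ hξ => by
    refine (hC ξ).trans ?_
    rw [← ENNReal.ofReal_ofNat 2, ENNReal.ofReal_rpow_of_pos two_pos,
      ← ENNReal.ofReal_mul (by positivity), mul_assoc]
    have hjb : 0 ≤ jb ξ t := by unfold jb; positivity
    exact ENNReal.ofReal_le_ofReal
      (mul_le_mul (le_abs_self C) (jb_le_of_mem_dyadicShell hξ t) hjb (abs_nonneg C))
  refine (eLpNorm_eLpNorm_le_of_continuous (fun x => (ha.contDiff_mderiv α x).continuous)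
    (ha.2.1 α) hsp ((ae_restrict_iff' isClosed_dyadicShell.measurableSet).2
      (.of_forall hsymbol))).trans ?_
  rw [Measure.restrict_apply_univ]
  calc volume (dyadicShell n j) ^ σ * (ENNReal.ofReal (|C| * 4 ^ |t|) * 2 ^ (j * t))
      ≤ (2 ^ (j * n) * volume (Metric.closedBall (0 : En n) 4)) ^ σ *
          (ENNReal.ofReal (|C| * 4 ^ |t|) * 2 ^ (j * t)) := by
        gcongr
        exact volume_dyadicShell_le
    _ = _ := by
        rw [ENNReal.mul_rpow_of_nonneg _ _ hσ, ← ENNReal.rpow_natCast, ← ENNReal.rpow_mul, mul_add,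
          ENNReal.rpow_add _ _ two_ne_zero ENNReal.ofNat_ne_top, ENNReal.coe_mul,
          ENNReal.coe_rpow_of_nonneg _ hσ, ENNReal.coe_toNNReal hball]
        push_cast
        rw [ENNReal.ofReal, mul_assoc (j : ℝ)]
        ring

lemma LpSm.aemeasurable_scaledSobolevNorm (ha : LpSm p m ρ a) (hst : s ≠ ⊤) (N : ℕ) (R : ℝ≥0)
    (S : Set (En n)) : AEMeasurable (fun x => scaledSobolevNorm N s R S (a x)) :=
  Finset.aemeasurable_fun_sum _ fun α _ => (ha.aemeasurable_eLpNorm_mderiv hst α S).const_mul _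

lemma LpSm.exists_eLpNorm_scaledSobolevNorm_le (ha : LpSm p m ρ a) (hp : 1 ≤ p) (hst : s ≠ ⊤)
    (hsp : s ≤ p) (N : ℕ) :
    ∃ C : ℝ≥0, ∀ j : ℕ,
      eLpNorm (fun x => scaledSobolevNorm N s (2 ^ (j * ρ)) (dyadicShell n j) (a x)) p volume ≤
        C * 2 ^ (j * (n * s⁻¹.toReal + m)) := by
  choose C hC using fun α => ha.exists_eLpNorm_eLpNorm_mderiv_le hsp α
  refine ⟨∑ α ∈ multiIdx n N, C α, fun j => ?_⟩
  refine (eLpNorm_sum_const_mul_le _ _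
    (fun α => ha.aemeasurable_eLpNorm_mderiv hst α (dyadicShell n j)) hp).trans ?_
  rw [ENNReal.ofNNReal_finsetSum, Finset.sum_mul]
  refine Finset.sum_le_sum fun α _ => (mul_le_mul_right (hC α j) _).trans_eq ?_
  rw [mul_left_comm, ENNReal.coe_pow, ENNReal.coe_rpow_of_ne_zero two_ne_zero, ENNReal.coe_ofNat,
    ← ENNReal.rpow_natCast, ← ENNReal.rpow_mul,
    ← ENNReal.rpow_add _ _ two_ne_zero ENNReal.ofNat_ne_top]
  congr 2
  ring

end Amplitude

section Boundedness

variable {n N : ℕ} {s s' p q r : ℝ≥0∞}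

lemma enorm_fio_le (a : En n → En n → ℂ) (φ : En n → En n → ℝ) (f : En n → ℂ) (x : En n) :
    ‖fio a φ f x‖ₑ ≤ ‖∫ ξ, exp (I * ofReal (φ x ξ)) * a x ξ * ft f ξ‖ₑ := by
  rw [fio, enorm_smul]
  refine mul_le_of_le_one_left' ?_
  rw [Real.enorm_eq_ofReal (by positivity), ENNReal.ofReal_le_one]
  exact inv_le_one_of_one_le₀ (one_le_pow₀ (by nlinarith [Real.pi_gt_three]))

lemma enorm_integral_le_tsum_littlewoodPaley (G : En n → ℂ) :
    ‖∫ ξ, G ξ‖ₑ ≤ ∑' j, ‖∫ ξ, littlewoodPaley j ξ * G ξ‖ₑ := by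
  by_cases hG : Integrable G
  swap
  · simp [integral_undef hG]
  have hpiece : ∀ j, Integrable fun ξ => littlewoodPaley j ξ * G ξ := fun j =>
    hG.bdd_mul contDiff_littlewoodPaley.continuous.aestronglyMeasurable
      (.of_forall fun _ => norm_littlewoodPaley_le_two)
  have hsum : ∀ J, ∫ ξ, (∑ j ∈ Finset.range J, littlewoodPaley j ξ) * G ξ =
      ∑ j ∈ Finset.range J, ∫ ξ, littlewoodPaley j ξ * G ξ := fun J => by
    simp_rw [Finset.sum_mul]
    exact integral_finsetSum _ fun j _ => hpiece j
  have hlim : Filter.Tendsto (fun J => ∫ ξ, (∑ j ∈ Finset.range J, littlewoodPaley j ξ) * G ξ)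
      Filter.atTop (nhds (∫ ξ, G ξ)) := by
    refine tendsto_integral_of_dominated_convergence (fun ξ => ‖G ξ‖) (fun J => ?_) hG.norm
      (fun J => .of_forall fun ξ => ?_) (.of_forall fun ξ => ?_)
    · exact (continuous_finsetSum _ fun j _ =>
        contDiff_littlewoodPaley.continuous).aestronglyMeasurable.mul hG.1
    · rw [norm_mul]
      exact mul_le_of_le_one_left (norm_nonneg _) (norm_sum_range_littlewoodPaley_le_one J)
    · simpa using (tendsto_sum_range_littlewoodPaley ξ).mul_const (G ξ)
  refine le_of_tendsto hlim.enorm (.of_forall fun J => ?_)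
  rw [hsum]
  exact (enorm_sum_le _ _).trans (ENNReal.sum_le_tsum _)

lemma enorm_fio_le_tsum_littlewoodPaley (a : En n → En n → ℂ) (f : En n → ℂ) (x : En n) :
    ‖fio a (fun x ξ => ⟪x, ξ⟫) f x‖ₑ ≤
      ∑' j, ‖∫ ξ, exp (I * ofReal ⟪x, ξ⟫) * (littlewoodPaley j ξ * a x ξ) * ft f ξ‖ₑ := by
  refine (enorm_fio_le a _ f x).trans ((enorm_integral_le_tsum_littlewoodPaley _).trans_eq ?_)
  refine tsum_congr fun j => ?_
  congr 2
  ext ξ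
  ring

lemma exists_enorm_fio_le_tsum (n N : ℕ) [ENNReal.HolderConjugate s s'] (hs2 : s ≤ 2) :
    ∃ K : ℝ≥0, ∀ (ρ : ℝ), ρ ≤ 1 → ∀ (a : En n → En n → ℂ), (∀ x, ContDiff ℝ (⊤ : ℕ∞) (a x)) →
      ∀ f : En n → ℂ, Integrable f → ∀ x, ‖fio a (fun x ξ => ⟪x, ξ⟫) f x‖ₑ ≤
        K * ∑' j : ℕ, scaledSobolevNorm N s (2 ^ (j * ρ)) (dyadicShell n j) (a x) *
          eLpNorm (fun z => (polyWeight N (2 ^ (j * ρ)) z)⁻¹ * ‖f (x - z)‖ₑ) s volume := by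
  obtain ⟨K, hK⟩ := exists_enorm_integral_littlewoodPaley_le (s := s) (s' := s') n N hs2
  refine ⟨K, fun ρ hρ a ha f hf x => (enorm_fio_le_tsum_littlewoodPaley a f x).trans ?_⟩
  rw [← ENNReal.tsum_mul_left]
  refine ENNReal.tsum_le_tsum fun j => (hK j (2 ^ (j * ρ)) ?_ (a x) f (ha x) hf x).trans_eq
    (mul_assoc _ _ _)
  rw [← NNReal.rpow_natCast]
  exact NNReal.rpow_le_rpow_of_exponent_le one_le_two
    (mul_le_of_le_one_right (Nat.cast_nonneg j) hρ)

lemma measurable_eLpNorm_inv_polyWeight_mul {f : En n → ℂ} (hf : Measurable f) (hst : s ≠ ⊤)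
    (N : ℕ) (R : ℝ≥0) :
    Measurable fun x => eLpNorm (fun z => (polyWeight N R z)⁻¹ * ‖f (x - z)‖ₑ) s volume :=
  measurable_eLpNorm_prodMk (((measurable_polyWeight.comp measurable_snd).inv).mul
    (hf.comp (measurable_fst.sub measurable_snd)).enorm) hst

lemma exists_eLpNorm_eLpNorm_inv_polyWeight_mul_le (hN : n < N) (hs : 1 ≤ s) (hst : s ≠ ⊤)
    (hsq : s ≤ q) :
    ∃ C : ℝ≥0, ∀ R : ℝ≥0, R ≠ 0 → ∀ f : En n → ℂ, Measurable f →
      eLpNorm (fun x => eLpNorm (fun z => (polyWeight N R z)⁻¹ * ‖f (x - z)‖ₑ) s volume) q volume ≤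
        C * (R : ℝ≥0∞) ^ (-(n * s⁻¹.toReal)) * eLpNorm f q volume := by
  obtain ⟨C, hC⟩ := exists_eLpNorm_inv_polyWeight_le hN hs hst
  refine ⟨C, fun R hR f hf => ?_⟩
  have hWs : eLpNorm (fun z : En n => (polyWeight N R z)⁻¹) s volume ≠ ⊤ :=
    ne_top_of_le_ne_top (ENNReal.mul_ne_top ENNReal.coe_ne_top
      (ENNReal.rpow_ne_top_of_ne_zero (by simpa using hR) ENNReal.coe_ne_top)) (hC R hR)
  refine (eLpNorm_eLpNorm_mul_comp_sub_le measurable_polyWeight.inv hf.enorm hst hsq hWs).trans ?_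
  rw [eLpNorm_enorm]
  gcongr
  exact hC R hR

lemma LpSm.exists_eLpNorm_tsum_scaledSobolevNorm_mul_le {m ρ : ℝ} {a : En n → En n → ℂ}
    [ENNReal.HolderTriple p q r] (ha : LpSm p m ρ a) (hN : n < N) (hs : 1 ≤ s) (hst : s ≠ ⊤)
    (hsp : s ≤ p) (hsq : s ≤ q) (hm : m < n * (ρ - 1) * s⁻¹.toReal) :
    ∃ C : ℝ≥0, ∀ f : En n → ℂ, Measurable f →
      eLpNorm (fun x => ∑' j : ℕ,
        scaledSobolevNorm N s (2 ^ (j * ρ)) (dyadicShell n j) (a x) *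
          eLpNorm (fun z => (polyWeight N (2 ^ (j * ρ)) z)⁻¹ * ‖f (x - z)‖ₑ) s volume) r volume ≤
        C * eLpNorm f q volume := by
  obtain ⟨CA, hCA⟩ := ha.exists_eLpNorm_scaledSobolevNorm_le (hs.trans hsp) hst hsp N
  obtain ⟨CB, hCB⟩ := exists_eLpNorm_eLpNorm_inv_polyWeight_mul_le hN hs hst hsq
  obtain ⟨S, hS⟩ := exists_eLpNorm_tsum_mul_le_of_two_rpow (μ := (volume : Measure (En n)))
    (hs.trans hsp) (hs.trans hsq) (r := r) (α := n * s⁻¹.toReal + m)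
    (β := ρ * -(n * s⁻¹.toReal)) (by linarith)
  refine ⟨S * (CA * CB), fun f hf => ?_⟩
  have htranslate : ∀ j : ℕ, eLpNorm (fun x => eLpNorm (fun z =>
      (polyWeight N (2 ^ (j * ρ)) z)⁻¹ * ‖f (x - z)‖ₑ) s volume) q volume ≤
        (CB * eLpNorm f q volume) * 2 ^ (j * (ρ * -(n * s⁻¹.toReal))) := fun j => by
    refine (hCB _ (NNReal.rpow_pos two_pos).ne' f hf).trans_eq ?_
    rw [ENNReal.coe_rpow_of_ne_zero two_ne_zero, ENNReal.coe_ofNat, ← ENNReal.rpow_mul,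
      mul_assoc (j : ℝ)]
    ring
  refine (hS (fun j => ha.aemeasurable_scaledSobolevNorm hst _ _ _)
    (fun j => (measurable_eLpNorm_inv_polyWeight_mul hf hst _ _).aemeasurable) hCA
    htranslate).trans_eq ?_
  push_cast
  ring

end Boundedness

theorem statement8_general {n : ℕ} (r p q : ℝ≥0∞) (hp : 1 ≤ p) (hq : 1 ≤ q)
    (hrpq : r⁻¹ = q⁻¹ + p⁻¹) (m ρ : ℝ) (hρ1 : ρ ≤ 1)
    (hm : m < (n : ℝ) * (ρ - 1) * (min 2 (min p q))⁻¹.toReal) (a : En n → En n → ℂ)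
    (ha : LpSm p m ρ a) :
    ∃ C : ℝ, 0 < C ∧ ∀ f : 𝓢(En n, ℂ),
      eLpNorm (fio a (fun x ξ => ⟪x, ξ⟫) (⇑f)) r volume ≤
        ENNReal.ofReal C * eLpNorm (⇑f) q volume := by
  set s := min 2 (min p q)
  have hs : 1 ≤ s := le_min one_le_two (le_min hp hq)
  have hs2 : s ≤ 2 := min_le_left _ _
  have hsp : s ≤ p := (min_le_right _ _).trans (min_le_left _ _)
  have hsq : s ≤ q := (min_le_right _ _).trans (min_le_right _ _)
  have hst : s ≠ ⊤ := ne_top_of_le_ne_top ENNReal.ofNat_ne_top hs2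
  have : ENNReal.HolderTriple p q r := ⟨by rw [hrpq, add_comm]⟩
  have : ENNReal.HolderConjugate s s.conjExponent := .conjExponent hs
  obtain ⟨K, hK⟩ := exists_enorm_fio_le_tsum (s' := s.conjExponent) n (n + 1) hs2
  obtain ⟨C, hC⟩ := ha.exists_eLpNorm_tsum_scaledSobolevNorm_mul_le (r := r) n.lt_succ_self hs hst
    hsp hsq hm
  refine ⟨(K * C : ℝ≥0) + 1, by positivity, fun f => ?_⟩
  calc eLpNorm (fio a (fun x ξ => ⟪x, ξ⟫) f) r volume
      ≤ K * (C * eLpNorm f q volume) :=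
        le_trans (eLpNorm_le_mul_eLpNorm_of_ae_le_mul' (.of_forall <| by
          simpa only [enorm_eq_self] using hK ρ hρ1 a ha.1 f f.integrable) r)
          (mul_le_mul_right (hC f f.continuous.measurable) _)
    _ = (K * C : ℝ≥0) * eLpNorm f q volume := by rw [ENNReal.coe_mul, mul_assoc]
    _ ≤ ENNReal.ofReal ((K * C : ℝ≥0) + 1) * eLpNorm f q volume := by
        gcongr
        rw [ENNReal.ofReal_add (by positivity) zero_le_one, ENNReal.ofReal_coe_nnreal]
        exact le_self_add

/-- Theorem 4.10: boundedness of rough pseudodifferential operators. -/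
theorem statement8 {n : ℕ} (r p q : ℝ≥0∞) (hr : 0 < r) (hp : 1 ≤ p) (hq : 1 ≤ q)
    (hrpq : r⁻¹ = q⁻¹ + p⁻¹)
    (m ρ : ℝ) (hρ0 : 0 ≤ ρ) (hρ1 : ρ ≤ 1)
    (hm : m < (n : ℝ) * (ρ - 1) * (min 2 (min p q))⁻¹.toReal)
    (a : En n → En n → ℂ) (ha : LpSm p m ρ a) :
    ∃ C : ℝ, 0 < C ∧ ∀ f : 𝓢(En n, ℂ),
      eLpNorm (fio a (fun x ξ => ⟪x, ξ⟫) (⇑f)) r volume ≤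
        ENNReal.ofReal C * eLpNorm (⇑f) q volume := by
  exact statement8_general r p q hp hq hrpq m ρ hρ1 hm a ha
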